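/- arXiv:1711.05924 — 6 statements merged into one kernel-verified Lean document; each statement's English description precedes it below -/
import Mathlib

section
/- For every integer n ≥ 1 there exists a divisor d of n with d^4 ≤ n such that τ(n) ≤ 8·τ(d)^7. -/
/-!
Write `τ` for the number of divisors and `Ω` for the number of prime factors counted with
multiplicity; the constants of the theorem come from `k = 3`. Factor `n` into pairwise coprime
pieces, each having a divisor `d` with `d ^ (k + 1)` at most the piece and
`τ(piece) ≤ τ(d) ^ (2 * k + 1)`; these relations multiply over coprime pieces. A prime power `p ^ e`
with `k < e` is such a piece, with `d = p ^ (e / (k + 1))`. The prime powers with `e ≤ k` are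
collected greedily until their product `m` has `k < Ω m`; then `Ω m ≤ 2 * k`, and the least prime
factor `q` of `m` serves as `d`, because `q ^ Ω m ≤ m` and `τ(m) ≤ 2 ^ Ω m`. What is left at the end
has `Ω ≤ k`, hence at most `2 ^ k` divisors.
-/

open scoped ArithmeticFunction.Omega

theorem card_divisors_mul_le (m n : ℕ) :
    (m * n).divisors.card ≤ m.divisors.card * n.divisors.card := by
  open scoped Pointwise in
  rw [Nat.divisors_mul]
  exact Finset.card_mul_le

theorem card_divisors_prime {p : ℕ} (hp : p.Prime) : p.divisors.card = 2 := by
  rw [hp.divisors, Finset.card_pair hp.ne_one.symm]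

theorem card_divisors_prime_pow {p : ℕ} (hp : p.Prime) (e : ℕ) :
    (p ^ e).divisors.card = e + 1 := by
  rw [Nat.divisors_prime_pow hp, Finset.card_map, Finset.card_range]

theorem card_divisors_le_two_pow_cardFactors (n : ℕ) : n.divisors.card ≤ 2 ^ Ω n := by
  induction n using induction_on_primes with
  | zero => simp
  | one => simp
  | prime_mul p m hp ih =>
    obtain rfl | hm := eq_or_ne m 0
    · simp
    calc (p * m).divisors.card
        ≤ p.divisors.card * m.divisors.card := card_divisors_mul_le p m
      _ ≤ 2 * 2 ^ Ω m := by rw [card_divisors_prime hp]; gcongr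
      _ = 2 ^ Ω (p * m) := by
        rw [ArithmeticFunction.cardFactors_mul hp.ne_zero hm,
          ArithmeticFunction.cardFactors_apply_prime hp, pow_add, pow_one]

theorem minFac_pow_cardFactors_le {n : ℕ} (hn : n ≠ 0) : n.minFac ^ Ω n ≤ n := by
  calc n.minFac ^ Ω n
      = n.minFac ^ n.primeFactorsList.length := by rw [ArithmeticFunction.cardFactors_apply]
    _ ≤ n.primeFactorsList.prod := List.pow_card_le_prod _ _ fun q hq =>
      Nat.minFac_le_of_dvd (Nat.prime_of_mem_primeFactorsList hq).two_le
        (Nat.dvd_of_mem_primeFactorsList hq)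
    _ = n := Nat.prod_primeFactorsList hn

/-- `d` is a divisor of `n` that is small, being at most the `a`-th root of `n`, and yet has so many
divisors that their number, raised to the power `b`, dominates the number of divisors of `n`. The
root is avoided by comparing `d ^ a` with `n`. -/
structure IsDominantDivisor (a b d n : ℕ) : Prop where
  dvd : d ∣ n
  pow_le : d ^ a ≤ n
  card_divisors_le : n.divisors.card ≤ d.divisors.card ^ b

namespace IsDominantDivisor

theorem one (a b : ℕ) : IsDominantDivisor a b 1 1 where
  dvd := dvd_rfl
  pow_le := (one_pow a).le
  card_divisors_le := by simp

theorem mul {a b d₁ d₂ n₁ n₂ : ℕ} (h₁ : IsDominantDivisor a b d₁ n₁)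
    (h₂ : IsDominantDivisor a b d₂ n₂) (hn : n₁.Coprime n₂) :
    IsDominantDivisor a b (d₁ * d₂) (n₁ * n₂) where
  dvd := mul_dvd_mul h₁.dvd h₂.dvd
  pow_le := by
    rw [mul_pow]
    exact Nat.mul_le_mul h₁.pow_le h₂.pow_le
  card_divisors_le := by
    have hd : d₁.Coprime d₂ := hn.of_dvd h₁.dvd h₂.dvd
    rw [hn.card_divisors_mul, hd.card_divisors_mul, mul_pow]
    exact Nat.mul_le_mul h₁.card_divisors_le h₂.card_divisors_le

theorem prime_pow {a b e p : ℕ} (hp : p.Prime) (ha : 0 < a) (hab : a ≤ 2 ^ b) (hae : a ≤ e) :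
    IsDominantDivisor a (b + 1) (p ^ (e / a)) (p ^ e) where
  dvd := pow_dvd_pow p (Nat.div_le_self e a)
  pow_le := by
    rw [← pow_mul]
    exact Nat.pow_le_pow_right hp.pos (Nat.div_mul_le_self e a)
  card_divisors_le := by
    have two_le : 2 ≤ e / a + 1 := Nat.succ_le_succ (Nat.div_pos hae ha)
    rw [card_divisors_prime_pow hp, card_divisors_prime_pow hp]
    calc e + 1 ≤ a * (e / a + 1) := Nat.lt_mul_div_succ e ha
      _ ≤ (e / a + 1) ^ b * (e / a + 1) := by
        gcongr
        exact hab.trans (Nat.pow_le_pow_left two_le b)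
      _ = (e / a + 1) ^ (b + 1) := (pow_succ _ b).symm

theorem minFac {a b n : ℕ} (ha : 0 < a) (han : a ≤ Ω n) (hnb : Ω n ≤ b) :
    IsDominantDivisor a b n.minFac n := by
  have one_lt : 1 < n := ArithmeticFunction.cardFactors_pos_iff_one_lt.1 (ha.trans_le han)
  have prime_minFac : n.minFac.Prime := Nat.minFac_prime one_lt.ne'
  refine ⟨n.minFac_dvd, ?_, ?_⟩
  · calc n.minFac ^ a ≤ n.minFac ^ Ω n := Nat.pow_le_pow_right prime_minFac.pos han
      _ ≤ n := minFac_pow_cardFactors_le (Nat.ne_zero_of_lt one_lt)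
  · calc n.divisors.card ≤ 2 ^ Ω n := card_divisors_le_two_pow_cardFactors n
      _ ≤ 2 ^ b := Nat.pow_le_pow_right two_pos hnb
      _ = n.minFac.divisors.card ^ b := by rw [card_divisors_prime prime_minFac]

end IsDominantDivisor

theorem exists_coprime_mul_eq_isDominantDivisor_cardFactors_le (k : ℕ) {n : ℕ} (hn : n ≠ 0) :
    ∃ A B d : ℕ, A * B = n ∧ A.Coprime B ∧
      IsDominantDivisor (k + 1) (2 * k + 1) d A ∧ Ω B ≤ k := by
  induction n using Nat.recOnPrimePow with
  | zero => exact absurd rfl hn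
  | one => exact ⟨1, 1, 1, one_mul 1, Nat.coprime_one_left 1, .one _ _, by simp⟩
  | prime_pow_mul m p e hp hpm _ ih =>
    obtain ⟨A, B, d, rfl, hAB, hd, hB⟩ := ih (right_ne_zero_of_mul hn)
    have hpAB : (p ^ e).Coprime (A * B) := (hp.coprime_iff_not_dvd.2 hpm).pow_left e
    have hpA : (p ^ e).Coprime A := hpAB.coprime_mul_right_right
    have hpB : (p ^ e).Coprime B := hpAB.coprime_mul_left_right
    obtain hke | hek := Nat.lt_or_ge k e
    · have k_lt : k < 2 ^ (2 * k) := by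
        calc k ≤ 2 * k := Nat.le_mul_of_pos_left k two_pos
          _ < 2 ^ (2 * k) := Nat.lt_two_pow_self
      exact ⟨p ^ e * A, B, p ^ (e / (k + 1)) * d, mul_assoc _ _ _, hpB.mul_left hAB,
        (IsDominantDivisor.prime_pow hp k.succ_pos k_lt hke).mul hd hpA, hB⟩
    · have hA : A.Coprime (p ^ e * B) := hpA.symm.mul_right hAB
      have cardFactors_eq : Ω (p ^ e * B) = e + Ω B := by
        rw [ArithmeticFunction.cardFactors_mul (pow_ne_zero e hp.ne_zero)
          (right_ne_zero_of_mul (right_ne_zero_of_mul hn)),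
          ArithmeticFunction.cardFactors_apply_prime_pow hp]
      obtain hΩ | hΩ := Nat.lt_or_ge k (Ω (p ^ e * B))
      · exact ⟨A * (p ^ e * B), 1, d * (p ^ e * B).minFac, by ring, Nat.coprime_one_right _,
          hd.mul (.minFac k.succ_pos hΩ (by lia)) hA, by simp⟩
      · exact ⟨A, p ^ e * B, d, mul_left_comm _ _ _, hA, hd, hΩ⟩

theorem divisor_bound_exists_general (k n : ℕ) (hn : 1 ≤ n) :
    ∃ d : ℕ, d ∣ n ∧ d ^ (k + 1) ≤ n ∧
      n.divisors.card ≤ 2 ^ k * d.divisors.card ^ (2 * k + 1) := by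
  obtain ⟨A, B, d, rfl, hAB, hd, hB⟩ :=
    exists_coprime_mul_eq_isDominantDivisor_cardFactors_le k (Nat.ne_zero_of_lt hn)
  have card_divisors_B_le : B.divisors.card ≤ 2 ^ k :=
    (card_divisors_le_two_pow_cardFactors B).trans (Nat.pow_le_pow_right two_pos hB)
  refine ⟨d, hd.dvd.mul_right B, ?_, ?_⟩
  · exact hd.pow_le.trans (Nat.le_mul_of_pos_right A (Nat.pos_of_mul_pos_left hn))
  · calc (A * B).divisors.card = B.divisors.card * A.divisors.card := by
          rw [hAB.card_divisors_mul, mul_comm]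
      _ ≤ 2 ^ k * d.divisors.card ^ (2 * k + 1) :=
        Nat.mul_le_mul card_divisors_B_le hd.card_divisors_le

theorem divisor_bound_exists (n : ℕ) (hn : 1 ≤ n) :
    ∃ d : ℕ, d ∣ n ∧ d ^ 4 ≤ n ∧
      n.divisors.card ≤ 8 * d.divisors.card ^ 7 :=
  divisor_bound_exists_general 3 n hn
end

section
/- For every integer n ≥ 1 one has τ(n) ≤ 8 · ∑_{d | n, d^4 ≤ n} τ(d)^7, where the sum runs over all positive divisors d of n with d^4 ≤ n. -/
/-!
Fix `k` and call a divisor `d` of `n` small if `d ^ (k + 1) ≤ n`. At most `k` prime factors of `n`,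
counted with multiplicity, are not small. The small ones can be multiplied together, two factors at
a time, for as long as some product of two factors is still small. When this stops, any `k + 1`
disjoint pairs of factors would have a product exceeding `n`, so at most `2 * k + 1` factors are
left. Submultiplicativity of `τ` now gives `τ n ≤ 2 ^ k * τ d ^ (2 * k + 1)`, where `d` is a small
divisor with as many divisors as possible.
-/

section ListProducts

variable {M : Type*} [CommMonoid M]

theorem exists_list_prod_eq_pairwise_not_mul (p : M → Prop) (l : List M) (hl : ∀ x ∈ l, p x) :
    ∃ l' : List M, l'.prod = l.prod ∧ (∀ x ∈ l', p x) ∧ l'.Pairwise fun x y ↦ ¬ p (x * y) := by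
  obtain ⟨m, ⟨hprod, hp⟩, hmin⟩ := exists_minimalFor_of_wellFoundedLT
    (fun l' : List M ↦ l'.prod = l.prod ∧ ∀ x ∈ l', p x) List.length ⟨l, rfl, hl⟩
  refine ⟨m, hprod, hp, List.pairwise_iff_forall_sublist.2 fun {a b} hab hpab ↦ ?_⟩
  obtain ⟨t, hperm⟩ := hab.exists_perm_append
  have hmerged_prod : (a * b :: t).prod = l.prod := by
    rw [← hprod, hperm.prod_eq]
    simp [mul_assoc]
  have hmerged_mem : ∀ x ∈ a * b :: t, p x :=
    List.forall_mem_cons.2 ⟨hpab, fun x hx ↦ hp x (hperm.mem_iff.2 (by simp [hx]))⟩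
  have hmerged_length : (a * b :: t).length + 1 = m.length := by
    simp [hperm.length_eq]
  have := hmin ⟨hmerged_prod, hmerged_mem⟩ (by lia)
  lia

theorem exists_list_prod_dvd_of_pairwise_mul (p : M → Prop) :
    ∀ l : List M, l.Pairwise (fun x y ↦ p (x * y)) →
      ∃ l' : List M, l'.prod ∣ l.prod ∧ l'.length = l.length / 2 ∧ ∀ x ∈ l', p x
  | [], _ => ⟨[], by simp⟩
  | [_], _ => ⟨[], by simp⟩
  | a :: b :: l, h => by
    obtain ⟨ha, hbl⟩ := List.pairwise_cons.1 h
    obtain ⟨l', hdvd, hlength, hp⟩ := exists_list_prod_dvd_of_pairwise_mul p l hbl.of_cons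
    refine ⟨a * b :: l', ?_, by grind, List.forall_mem_cons.2 ⟨ha b (by simp), hp⟩⟩
    simpa [mul_assoc] using mul_dvd_mul_left (a * b) hdvd

end ListProducts

section LengthBounds

variable {N k : ℕ} {l : List ℕ}

theorem length_le_of_forall_lt_pow_of_prod_le (hl : ∀ x ∈ l, N < x ^ (k + 1)) (hN : l.prod ≤ N) :
    l.length ≤ k := by
  have hpow : (N + 1) ^ l.length < (N + 1) ^ (k + 1) := calc
    (N + 1) ^ l.length = (N + 1) ^ (l.map (· ^ (k + 1))).length := by rw [List.length_map]
    _ ≤ (l.map (· ^ (k + 1))).prod := List.pow_card_le_prod _ _ (by simpa using hl)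
    _ = l.prod ^ (k + 1) := (map_list_prod (powMonoidHom (k + 1)) l).symm
    _ ≤ N ^ (k + 1) := Nat.pow_le_pow_left hN _
    _ < (N + 1) ^ (k + 1) := Nat.pow_lt_pow_left N.lt_succ_self k.succ_ne_zero
  by_contra! hlength
  exact hpow.not_ge (Nat.pow_le_pow_right N.succ_pos hlength)

theorem length_le_of_pairwise_lt_mul_pow_of_prod_le
    (hl : l.Pairwise fun x y ↦ N < (x * y) ^ (k + 1)) (hpos : 0 < l.prod) (hN : l.prod ≤ N) :
    l.length ≤ 2 * k + 1 := by
  obtain ⟨l', hdvd, hlength, hlt⟩ :=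
    exists_list_prod_dvd_of_pairwise_mul (fun z ↦ N < z ^ (k + 1)) l hl
  have := length_le_of_forall_lt_pow_of_prod_le hlt ((Nat.le_of_dvd hpos hdvd).trans hN)
  lia

theorem exists_list_prod_eq_length_le_forall_pow_le (hl : ∀ x ∈ l, x ^ (k + 1) ≤ N)
    (hpos : 0 < l.prod) (hN : l.prod ≤ N) :
    ∃ l' : List ℕ, l'.prod = l.prod ∧ l'.length ≤ 2 * k + 1 ∧ ∀ x ∈ l', x ^ (k + 1) ≤ N := by
  obtain ⟨l', hprod, hle, hpair⟩ := exists_list_prod_eq_pairwise_not_mul (· ^ (k + 1) ≤ N) l hl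
  refine ⟨l', hprod, ?_, hle⟩
  rw [← hprod] at hpos hN
  exact length_le_of_pairwise_lt_mul_pow_of_prod_le (hpair.imp not_le.1) hpos hN

end LengthBounds

theorem card_divisors_mul_le_s1 (a b : ℕ) :
    (a * b).divisors.card ≤ a.divisors.card * b.divisors.card := by
  rw [Nat.divisors_mul]
  exact Finset.card_mul_le

theorem card_divisors_list_prod_le_pow {C m : ℕ} {l : List ℕ} (hC : 0 < C)
    (hl : ∀ x ∈ l, x.divisors.card ≤ C) (hm : l.length ≤ m) : l.prod.divisors.card ≤ C ^ m := calc
  l.prod.divisors.card ≤ (l.map fun x ↦ x.divisors.card).prod :=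
    l.le_prod_of_submultiplicative (fun x ↦ x.divisors.card) (by simp) card_divisors_mul_le_s1
  _ ≤ C ^ l.length := by
    simpa only [List.length_map] using List.prod_le_pow_card _ C (List.forall_mem_map.2 hl)
  _ ≤ C ^ m := Nat.pow_le_pow_right hC hm

section SmallDivisors

variable {n k C : ℕ}

theorem card_divisors_prod_large_primes_le {l : List ℕ} (hprime : ∀ p ∈ l, p.Prime)
    (hlarge : ∀ p ∈ l, n < p ^ (k + 1)) (hn : l.prod ≤ n) : l.prod.divisors.card ≤ 2 ^ k := by
  refine card_divisors_list_prod_le_pow two_pos (fun p hp ↦ ?_)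
    (length_le_of_forall_lt_pow_of_prod_le hlarge hn)
  rw [(hprime p hp).divisors]
  exact Finset.card_le_two

theorem card_divisors_prod_small_le {l : List ℕ} (hn : n ≠ 0) (hdvd : l.prod ∣ n)
    (hsmall : ∀ x ∈ l, x ^ (k + 1) ≤ n)
    (hC : ∀ d, d ∣ n → d ^ (k + 1) ≤ n → d.divisors.card ≤ C) :
    l.prod.divisors.card ≤ C ^ (2 * k + 1) := by
  obtain ⟨l', hprod, hlength, hle⟩ := exists_list_prod_eq_length_le_forall_pow_le hsmall
    (Nat.pos_of_dvd_of_pos hdvd hn.pos) (Nat.le_of_dvd hn.pos hdvd)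
  have hC_pos : 1 ≤ C := by
    simpa using hC 1 (one_dvd n) (by simpa using Nat.one_le_iff_ne_zero.2 hn)
  rw [← hprod] at hdvd ⊢
  exact card_divisors_list_prod_le_pow hC_pos
    (fun x hx ↦ hC x ((List.dvd_prod hx).trans hdvd) (hle x hx)) hlength

theorem card_divisors_le_of_forall_small_divisor (hn : n ≠ 0)
    (hC : ∀ d, d ∣ n → d ^ (k + 1) ≤ n → d.divisors.card ≤ C) :
    n.divisors.card ≤ 2 ^ k * C ^ (2 * k + 1) := by
  let small := n.primeFactorsList.filter (· ^ (k + 1) ≤ n)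
  let large := n.primeFactorsList.filter (fun p ↦ !decide (p ^ (k + 1) ≤ n))
  have hsplit : large.prod * small.prod = n := by
    rw [mul_comm, ← List.prod_append, (List.filter_append_perm _ _).prod_eq,
      Nat.prod_primeFactorsList hn]
  have hlarge : large.prod.divisors.card ≤ 2 ^ k :=
    card_divisors_prod_large_primes_le
      (fun p hp ↦ Nat.prime_of_mem_primeFactorsList (List.mem_of_mem_filter hp))
      (fun p hp ↦ by simpa using List.of_mem_filter hp)
      (Nat.le_of_dvd hn.pos (Dvd.intro _ hsplit))
  have hsmall : small.prod.divisors.card ≤ C ^ (2 * k + 1) :=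
    card_divisors_prod_small_le hn (Dvd.intro_left _ hsplit)
      (fun p hp ↦ by simpa using List.of_mem_filter hp) hC
  calc n.divisors.card = (large.prod * small.prod).divisors.card := by rw [hsplit]
    _ ≤ large.prod.divisors.card * small.prod.divisors.card := card_divisors_mul_le_s1 _ _
    _ ≤ 2 ^ k * C ^ (2 * k + 1) := Nat.mul_le_mul hlarge hsmall

end SmallDivisors

theorem exists_small_divisor_card_divisors_le (k : ℕ) {n : ℕ} (hn : n ≠ 0) :
    ∃ d, d ∣ n ∧ d ^ (k + 1) ≤ n ∧
      n.divisors.card ≤ 2 ^ k * d.divisors.card ^ (2 * k + 1) := by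
  obtain ⟨d, hd, hmax⟩ := Finset.exists_max_image
    (n.divisors.filter fun d ↦ d ^ (k + 1) ≤ n) (fun d ↦ d.divisors.card)
    ⟨1, by simpa [hn] using Nat.one_le_iff_ne_zero.2 hn⟩
  simp only [Finset.mem_filter, Nat.mem_divisors] at hd hmax
  exact ⟨d, hd.1.1, hd.2, card_divisors_le_of_forall_small_divisor hn
    fun x hx hle ↦ hmax x ⟨⟨hx, hn⟩, hle⟩⟩

theorem divisor_sum_bound_general (k n : ℕ) (hn : n ≠ 0) :
    n.divisors.card ≤
      2 ^ k * ∑ d ∈ n.divisors.filter (fun d ↦ d ^ (k + 1) ≤ n),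
        d.divisors.card ^ (2 * k + 1) := by
  obtain ⟨d, hdvd, hsmall, hd⟩ := exists_small_divisor_card_divisors_le k hn
  refine hd.trans (Nat.mul_le_mul_left _ ?_)
  exact Finset.single_le_sum (f := fun d : ℕ ↦ d.divisors.card ^ (2 * k + 1))
    (fun _ _ ↦ Nat.zero_le _) (by simp [hdvd, hn, hsmall])

theorem divisor_sum_bound (n : ℕ) (hn : 1 ≤ n) :
    n.divisors.card ≤
      8 * ∑ d ∈ n.divisors.filter (fun d => d ^ 4 ≤ n), d.divisors.card ^ 7 :=
  divisor_sum_bound_general 3 n (Nat.one_le_iff_ne_zero.1 hn)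
end

section
/- Let n = p₁^{a₁} p₂^{a₂} ⋯ p_t^{a_t} where p₁, …, p_t are distinct primes, t ≥ 1, and a_i ≥ 4 for all 1 ≤ i ≤ t. Then there exists a divisor d of n with d^4 ≤ n such that 2^t · τ(n) ≤ τ(d)^4 (equivalently τ(n) ≤ 2^{-t} τ(d)^4). -/
/-!
Take `d = Nat.floorRoot 4 n`, obtained by dividing every exponent of `n` by four, rounding down.
An exponent `a ≥ 4` becomes `b = ⌊a / 4⌋ ≥ 1`, and `a + 1 ≤ 4 (b + 1)` gives
`2 (a + 1) ≤ 2 ^ 3 (b + 1) ≤ (b + 1) ^ 4`; multiply over the primes dividing `n`. The same argument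
works with any `k ≥ 1` in place of `4`, the constant `2` becoming `2 ^ (k - 1) / k`.
-/

open Finset

lemma two_pow_pred_mul_succ_le {k a : ℕ} (hk : k ≠ 0) (hka : k ≤ a) :
    2 ^ (k - 1) * (a + 1) ≤ k * (a / k + 1) ^ k := by
  have succ_le : a + 1 ≤ k * (a / k + 1) := Nat.lt_mul_div_succ a (Nat.pos_of_ne_zero hk)
  have two_le : 2 ≤ a / k + 1 := Nat.succ_le_succ (Nat.div_pos hka (Nat.pos_of_ne_zero hk))
  calc
    2 ^ (k - 1) * (a + 1) ≤ (a / k + 1) ^ (k - 1) * (k * (a / k + 1)) := by gcongr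
    _ = k * (a / k + 1) ^ k := by rw [mul_left_comm, pow_sub_one_mul hk]

lemma card_divisors_floorRoot {k n : ℕ} (hk : k ≠ 0) (hn : n ≠ 0) :
    #(Nat.floorRoot k n).divisors = ∏ q ∈ n.primeFactors, (n.factorization q / k + 1) := by
  have subset : (Nat.floorRoot k n).primeFactors ⊆ n.primeFactors :=
    Nat.primeFactors_mono ((dvd_pow_self _ hk).trans Nat.floorRoot_pow_dvd) hn
  rw [Nat.card_divisors (Nat.floorRoot_ne_zero.2 ⟨hk, hn⟩)]
  refine (prod_subset subset fun q _ hq ↦ ?_).trans (prod_congr rfl fun q _ ↦ ?_)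
  · rw [Finsupp.notMem_support_iff.1 hq, zero_add]
  · rw [Nat.factorization_floorRoot, Finsupp.floorDiv_apply, Nat.floorDiv_eq_div]

theorem two_pow_pred_pow_mul_card_divisors_le {k n : ℕ} (hk : k ≠ 0) (hn : n ≠ 0)
    (hfac : ∀ q ∈ n.primeFactors, k ≤ n.factorization q) :
    (2 ^ (k - 1)) ^ #n.primeFactors * #n.divisors ≤
      k ^ #n.primeFactors * #(Nat.floorRoot k n).divisors ^ k := by
  rw [Nat.card_divisors hn, card_divisors_floorRoot hk hn, ← prod_pow, ← prod_const, ← prod_const,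
    ← prod_mul_distrib, ← prod_mul_distrib]
  exact prod_le_prod' fun q hq ↦ two_pow_pred_mul_succ_le hk (hfac q hq)

section PrimePowerProduct

variable {ι : Type*} {s : Finset ι} {p a : ι → ℕ}

lemma prod_prime_pow_ne_zero (hp : ∀ i ∈ s, (p i).Prime) : ∏ i ∈ s, p i ^ a i ≠ 0 :=
  prod_ne_zero_iff.2 fun i hi ↦ pow_ne_zero _ (hp i hi).ne_zero

lemma primeFactors_prod_prime_pow (hp : ∀ i ∈ s, (p i).Prime) (ha : ∀ i ∈ s, a i ≠ 0) :
    (∏ i ∈ s, p i ^ a i).primeFactors = s.image p := by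
  ext q
  rw [Nat.mem_primeFactors_of_ne_zero (prod_prime_pow_ne_zero hp), mem_image]
  constructor
  · rintro ⟨hq, hdvd⟩
    obtain ⟨i, hi, hqi⟩ := (hq.prime.dvd_finsetProd_iff _).1 hdvd
    exact ⟨i, hi, ((Nat.prime_dvd_prime_iff_eq hq (hp i hi)).1 (hq.dvd_of_dvd_pow hqi)).symm⟩
  · rintro ⟨i, hi, rfl⟩
    exact ⟨hp i hi, (dvd_pow_self _ (ha i hi)).trans (dvd_prod_of_mem (fun i ↦ p i ^ a i) hi)⟩

lemma factorization_prod_prime_pow_apply (hp : ∀ i ∈ s, (p i).Prime) (hinj : Set.InjOn p s)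
    {j : ι} (hj : j ∈ s) : (∏ i ∈ s, p i ^ a i).factorization (p j) = a j := by
  rw [Nat.factorization_prod_apply fun i hi ↦ pow_ne_zero _ (hp i hi).ne_zero,
    sum_eq_single_of_mem j hj]
  · exact Nat.factorization_pow_self (hp j hj)
  · intro i hi hij
    rw [(hp i hi).factorization_pow, Finsupp.single_eq_of_ne' fun h ↦ hij (hinj hi hj h)]

end PrimePowerProduct

theorem high_exponent_case (t : ℕ) (ht : 1 ≤ t) (p : ℕ → ℕ) (a : ℕ → ℕ)
    (hp : ∀ i ∈ Finset.Icc 1 t, (p i).Prime)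
    (hdist : ∀ i ∈ Finset.Icc 1 t, ∀ j ∈ Finset.Icc 1 t, i ≠ j → p i ≠ p j)
    (ha : ∀ i ∈ Finset.Icc 1 t, 4 ≤ a i)
    (n : ℕ) (hn : n = ∏ i ∈ Finset.Icc 1 t, p i ^ a i) :
    ∃ d : ℕ, d ∣ n ∧ d ^ 4 ≤ n ∧
      2 ^ t * n.divisors.card ≤ d.divisors.card ^ 4 := by
  have hinj : Set.InjOn p (Icc 1 t) := fun i hi j hj hij ↦
    by_contra fun hne ↦ hdist i hi j hj hne hij
  have primeFactors_eq : n.primeFactors = (Icc 1 t).image p :=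
    hn ▸ primeFactors_prod_prime_pow hp fun i hi ↦ (four_pos.trans_le (ha i hi)).ne'
  have card_primeFactors : #n.primeFactors = t := by
    rw [primeFactors_eq, card_image_of_injOn hinj, Nat.card_Icc, Nat.add_sub_cancel]
  have four_le : ∀ q ∈ n.primeFactors, 4 ≤ n.factorization q := by
    rw [primeFactors_eq, forall_mem_image]
    intro i hi
    rw [hn, factorization_prod_prime_pow_apply hp hinj hi]
    exact ha i hi
  have hn0 : n ≠ 0 := hn ▸ prod_prime_pow_ne_zero hp
  have pow_dvd : Nat.floorRoot 4 n ^ 4 ∣ n := Nat.floorRoot_pow_dvd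
  refine ⟨Nat.floorRoot 4 n, (dvd_pow_self _ four_ne_zero).trans pow_dvd,
    Nat.le_of_dvd (Nat.pos_of_ne_zero hn0) pow_dvd, ?_⟩
  have bound := two_pow_pred_pow_mul_card_divisors_le four_ne_zero hn0 four_le
  rw [card_primeFactors, show 2 ^ (4 - 1) = 4 * 2 from rfl, mul_pow, mul_assoc] at bound
  exact Nat.le_of_mul_le_mul_left bound (by positivity)
end

section
/- Let n = p₁p₂⋯p_t be squarefree with distinct primes p₁ < p₂ < ⋯ < p_t. If 1 ≤ t ≤ 3, then there exists a divisor d of n with d^4 ≤ n such that τ(n) ≤ 2^t·τ(d). If t ≥ 4, then there exists a divisor d of n with d^4 ≤ n such that τ(n) ≤ τ(d)^7. -/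
/-!
A squarefree `n` with `t` prime factors has `2 ^ t` divisors. Let `d` be the product of its
`k = ⌊t / r⌋` smallest prime factors. The geometric mean of the smallest factors is at most that of
all of them, so `d ^ t ≤ n ^ k`, and `r * k ≤ t` yields `d ^ r ≤ n`. If `t ≥ r` then `k ≥ 1`, so
`t ≤ r * k + (r - 1) ≤ (2 * r - 1) * k`, that is, `τ(n) ≤ τ(d) ^ (2 * r - 1)`. The theorem is the
case `r = 4`, with `d = 1` when `t ≤ 3`.
-/

section SmallestFactors

open Finset

variable {ι M : Type*} {s u : Finset ι} {f : ι → M}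

theorem exists_subset_card_eq_forall_le_of_mem_sdiff [DecidableEq ι] [LinearOrder M]
    (s : Finset ι) (f : ι → M) {k : ℕ} (hk : k ≤ #s) :
    ∃ u ⊆ s, #u = k ∧ ∀ i ∈ u, ∀ j ∈ s \ u, f i ≤ f j := by
  induction k with
  | zero => exact ⟨∅, empty_subset s, card_empty, by simp⟩
  | succ k ih =>
    obtain ⟨u, hus, hcard, hle⟩ := ih (by omega)
    have hrest : (s \ u).Nonempty := by
      rw [← card_pos, card_sdiff_of_subset hus]
      omega
    obtain ⟨m, hm, hmin⟩ := exists_min_image (s \ u) f hrest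
    obtain ⟨hms, hmu⟩ := mem_sdiff.1 hm
    refine ⟨insert m u, insert_subset hms hus, by rw [card_insert_of_notMem hmu, hcard], ?_⟩
    intro i hi j hj
    have hj' : j ∈ s \ u := sdiff_subset_sdiff Subset.rfl (subset_insert m u) hj
    rcases mem_insert.1 hi with rfl | hi
    · exact hmin j hj'
    · exact hle i hi j hj'

variable [CommMonoid M]

theorem prod_pow_card_le_prod_pow_card [Preorder M] [MulLeftMono M]
    (h : ∀ i ∈ s, ∀ j ∈ u, f i ≤ f j) :
    (∏ i ∈ s, f i) ^ #u ≤ (∏ j ∈ u, f j) ^ #s :=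
  calc (∏ i ∈ s, f i) ^ #u = ∏ i ∈ s, ∏ _j ∈ u, f i := by simp only [prod_const, prod_pow]
    _ ≤ ∏ _i ∈ s, ∏ j ∈ u, f j := prod_le_prod' fun i hi ↦ prod_le_prod' (h i hi)
    _ = (∏ j ∈ u, f j) ^ #s := prod_const _

theorem prod_pow_card_le_prod_pow_card_of_subset [DecidableEq ι] [Preorder M] [MulLeftMono M]
    (hus : u ⊆ s) (h : ∀ i ∈ u, ∀ j ∈ s \ u, f i ≤ f j) :
    (∏ i ∈ u, f i) ^ #s ≤ (∏ i ∈ s, f i) ^ #u :=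
  calc (∏ i ∈ u, f i) ^ #s = (∏ i ∈ u, f i) ^ #u * (∏ i ∈ u, f i) ^ #(s \ u) := by
        rw [← pow_add, add_comm, card_sdiff_add_card_eq_card hus]
    _ ≤ (∏ i ∈ u, f i) ^ #u * (∏ i ∈ s \ u, f i) ^ #u := by
        gcongr _ * ?_
        exact prod_pow_card_le_prod_pow_card h
    _ = (∏ i ∈ s, f i) ^ #u := by rw [← mul_pow, mul_comm, prod_sdiff hus]

theorem exists_subset_card_eq_prod_pow_card_le [LinearOrder M] [MulLeftMono M]
    (s : Finset ι) (f : ι → M) {k : ℕ} (hk : k ≤ #s) :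
    ∃ u ⊆ s, #u = k ∧ (∏ i ∈ u, f i) ^ #s ≤ (∏ i ∈ s, f i) ^ k := by
  classical
  obtain ⟨u, hus, rfl, hle⟩ := exists_subset_card_eq_forall_le_of_mem_sdiff s f hk
  exact ⟨u, hus, rfl, prod_pow_card_le_prod_pow_card_of_subset hus hle⟩

end SmallestFactors

section Squarefree

open Finset

variable {ι : Type*} {s : Finset ι} {p : ι → ℕ} {n r k : ℕ}

theorem squarefree_prod_of_prime_of_injOn (hp : ∀ i ∈ s, (p i).Prime) (hinj : Set.InjOn p s) :
    Squarefree (∏ i ∈ s, p i) := by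
  refine squarefree_prod_of_pairwise_isCoprime (fun i hi j hj hij ↦ ?_)
    fun i hi ↦ (hp i hi).prime.squarefree
  exact Nat.coprime_iff_isRelPrime.1 <|
    (Nat.coprime_primes (hp i hi) (hp j hj)).2 (hinj.ne hi hj hij)

theorem card_primeFactors_prod_of_prime_of_injOn (hp : ∀ i ∈ s, (p i).Prime)
    (hinj : Set.InjOn p s) : #(∏ i ∈ s, p i).primeFactors = #s := by
  rw [← prod_image (g := p) (f := fun q ↦ q) hinj, Nat.primeFactors_prod (by simpa using hp),
    card_image_of_injOn hinj]

theorem card_divisors_of_squarefree (hn : Squarefree n) :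
    #n.divisors = 2 ^ #n.primeFactors := by
  rw [Nat.card_divisors hn.ne_zero, ← prod_const]
  refine prod_congr rfl fun q hq ↦ ?_
  rw [Nat.factorization_eq_one_of_squarefree hn (Nat.prime_of_mem_primeFactors hq)
    (Nat.dvd_of_mem_primeFactors hq)]

theorem exists_dvd_card_primeFactors_eq_pow_le (hn : Squarefree n) (hk : k ≤ #n.primeFactors) :
    ∃ d, d ∣ n ∧ #d.primeFactors = k ∧ d ^ #n.primeFactors ≤ n ^ k := by
  obtain ⟨u, hu, hcard, hpow⟩ := exists_subset_card_eq_prod_pow_card_le n.primeFactors id hk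
  simp only [id, Nat.prod_primeFactors_of_squarefree hn] at hpow
  refine ⟨∏ q ∈ u, q, ?_, ?_, hpow⟩
  · exact (prod_dvd_prod_of_subset _ _ _ hu).trans (Nat.prod_primeFactors_dvd n)
  · rw [Nat.primeFactors_prod fun q hq ↦ Nat.prime_of_mem_primeFactors (hu hq), hcard]

theorem le_div_mul_two_mul_sub_one {t : ℕ} (hr : 1 ≤ r) (hrt : r ≤ t) :
    t ≤ t / r * (2 * r - 1) := by
  have hquot : 1 ≤ t / r := (Nat.one_le_div_iff hr).2 hrt
  have hdivmod : t / r * r + t % r = t := Nat.div_add_mod' t r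
  have hmod : t % r < r := Nat.mod_lt t hr
  calc t ≤ t / r * r + (r - 1) := by omega
    _ ≤ t / r * r + t / r * (r - 1) := by gcongr; exact Nat.le_mul_of_pos_left _ hquot
    _ = t / r * (2 * r - 1) := by rw [← mul_add]; congr 1; omega

theorem exists_dvd_pow_le_card_divisors_le_pow (hn : Squarefree n) (hr : 1 ≤ r)
    (hrn : r ≤ #n.primeFactors) :
    ∃ d, d ∣ n ∧ d ^ r ≤ n ∧ #n.divisors ≤ #d.divisors ^ (2 * r - 1) := by
  set t := #n.primeFactors
  have hk : 1 ≤ t / r := (Nat.one_le_div_iff hr).2 hrn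
  obtain ⟨d, hdn, hcard, hpow⟩ := exists_dvd_card_primeFactors_eq_pow_le hn (Nat.div_le_self t r)
  refine ⟨d, hdn, ?_, ?_⟩
  · have hd : 0 < d := Nat.pos_of_dvd_of_pos hdn (Nat.pos_of_ne_zero hn.ne_zero)
    refine le_of_pow_le_pow_left₀ (n := t / r) (by omega) n.zero_le ?_
    calc (d ^ r) ^ (t / r) = d ^ (r * (t / r)) := (pow_mul d r _).symm
      _ ≤ d ^ t := Nat.pow_le_pow_right hd (Nat.mul_div_le t r)
      _ ≤ n ^ (t / r) := hpow
  · rw [card_divisors_of_squarefree hn, card_divisors_of_squarefree (hn.squarefree_of_dvd hdn),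
      hcard, ← pow_mul]
    exact Nat.pow_le_pow_right two_pos (le_div_mul_two_mul_sub_one hr hrn)

theorem squarefree_case_general (r : ℕ) (hn : Squarefree n) :
    (∃ d, d ∣ n ∧ d ^ r ≤ n ∧ #n.divisors ≤ 2 ^ #n.primeFactors * #d.divisors) ∧
    (1 ≤ r → r ≤ #n.primeFactors →
      ∃ d, d ∣ n ∧ d ^ r ≤ n ∧ #n.divisors ≤ #d.divisors ^ (2 * r - 1)) := by
  refine ⟨⟨1, one_dvd n, ?_, ?_⟩, exists_dvd_pow_le_card_divisors_le_pow hn⟩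
  · rw [one_pow]
    exact Nat.pos_of_ne_zero hn.ne_zero
  · rw [Nat.divisors_one, card_singleton, mul_one, card_divisors_of_squarefree hn]

end Squarefree

theorem squarefree_case (t : ℕ) (p : ℕ → ℕ)
    (hp : ∀ i ∈ Finset.Icc 1 t, (p i).Prime)
    (hmono : ∀ i j, 1 ≤ i → i < j → j ≤ t → p i < p j)
    (n : ℕ) (hn : n = ∏ i ∈ Finset.Icc 1 t, p i) :
    (1 ≤ t → t ≤ 3 → ∃ d : ℕ, d ∣ n ∧ d ^ 4 ≤ n ∧
      n.divisors.card ≤ 2 ^ t * d.divisors.card) ∧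
    (4 ≤ t → ∃ d : ℕ, d ∣ n ∧ d ^ 4 ≤ n ∧
      n.divisors.card ≤ d.divisors.card ^ 7) := by
  have hinj : Set.InjOn p (Finset.Icc 1 t) := by
    rw [Finset.coe_Icc]
    exact StrictMonoOn.injOn fun i hi j hj hij ↦ hmono i j hi.1 hij hj.2
  have h := squarefree_case_general 4 (squarefree_prod_of_prime_of_injOn hp hinj)
  rw [card_primeFactors_prod_of_prime_of_injOn hp hinj, Nat.card_Icc, Nat.add_sub_cancel, ← hn] at h
  exact ⟨fun _ _ ↦ h.1, h.2 (by norm_num)⟩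
end

section
/- Let t₁ ≥ 4 and t₂ ≥ 4 be integers, let p₁ < p₂ < ⋯ < p_{t₁} and q₁ < q₂ < ⋯ < q_{t₂} be primes with all the p_i distinct from all the q_j, and set n = p₁²p₂²⋯p_{t₁}² · q₁³q₂³⋯q_{t₂}³ and d = p₁²⋯p_{⌊t₁/4⌋}² · q₁³⋯q_{⌊t₂/4⌋}³. Then d divides n, d^4 ≤ n, and τ(d)^6 = 3^{6⌊t₁/4⌋}·4^{6⌊t₂/4⌋} ≥ 3^{t₁-1}·4^{t₂-1} = τ(n)/12; in particular τ(n) ≤ 12·τ(d)^6. -/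
/-!
If `f` is monotone, each of the `m` values of `f` on the block `(m * k, m * (k + 1)]` is at least
`f (k + 1)`; so the `m`-th power of the product over the first `⌊t / m⌋` indices is at most the
product over the first `t` indices. Applied with `m = 4` to both families of prime powers, this
gives `d ^ 4 ≤ n`. The number of divisors is multiplicative, and the comparison of `τ n` with
`τ d ^ 6` reduces to `t - 1 ≤ 6 * ⌊t / 4⌋`, which holds for `t ≥ 4`.
-/

section BlockComparison

variable {M : Type*} [CommMonoid M] [PartialOrder M] [IsOrderedMonoid M] {f : ℕ → M} {m : ℕ}

theorem prod_Icc_one_pow_le_prod_Icc_one_mul {k : ℕ} (hf : MonotoneOn f (Set.Icc 1 (m * k))) :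
    (∏ i ∈ Finset.Icc 1 k, f i) ^ m ≤ ∏ i ∈ Finset.Icc 1 (m * k), f i := by
  induction k with
  | zero => simp
  | succ k ih =>
    have hle : m * k ≤ m * (k + 1) := Nat.mul_le_mul_left m k.le_succ
    have block : f (k + 1) ^ m ≤ ∏ i ∈ Finset.Ioc (m * k) (m * (k + 1)), f i := by
      have hcard : (Finset.Ioc (m * k) (m * (k + 1))).card = m := by
        rw [Nat.card_Ioc, ← Nat.mul_sub, Nat.add_sub_cancel_left, mul_one]
      have hge : ∀ i ∈ Finset.Ioc (m * k) (m * (k + 1)), f (k + 1) ≤ f i := by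
        intro i hi
        obtain ⟨hlt, hile⟩ := Finset.mem_Ioc.mp hi
        have hm : 0 < m := Nat.pos_of_mul_pos_right (by omega : 0 < m * (k + 1))
        have hki : k + 1 ≤ i := (Nat.le_mul_of_pos_left k hm).trans_lt hlt
        exact hf ⟨by omega, hki.trans hile⟩ ⟨by omega, hile⟩ hki
      simpa only [hcard] using Finset.pow_card_le_prod _ f _ hge
    calc (∏ i ∈ Finset.Icc 1 (k + 1), f i) ^ m
        = (∏ i ∈ Finset.Icc 1 k, f i) ^ m * f (k + 1) ^ m := by
          rw [Finset.prod_Icc_succ_top (by omega), mul_pow]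
      _ ≤ (∏ i ∈ Finset.Icc 1 (m * k), f i) * ∏ i ∈ Finset.Ioc (m * k) (m * (k + 1)), f i :=
          mul_le_mul' (ih (hf.mono (Set.Icc_subset_Icc_right hle))) block
      _ = ∏ i ∈ Finset.Icc 1 (m * (k + 1)), f i :=
          -- On `ℕ`, `Icc 1 _` unfolds to `Ioc 0 _`.
          Finset.prod_Ioc_consecutive f (Nat.zero_le _) hle

theorem prod_Icc_one_div_pow_le_prod_Icc_one {t : ℕ} (hf : MonotoneOn f (Set.Icc 1 t))
    (hone : ∀ i ∈ Finset.Icc 1 t, 1 ≤ f i) :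
    (∏ i ∈ Finset.Icc 1 (t / m), f i) ^ m ≤ ∏ i ∈ Finset.Icc 1 t, f i := by
  have hle : m * (t / m) ≤ t := Nat.mul_div_le t m
  calc (∏ i ∈ Finset.Icc 1 (t / m), f i) ^ m
      ≤ ∏ i ∈ Finset.Icc 1 (m * (t / m)), f i :=
        prod_Icc_one_pow_le_prod_Icc_one_mul (hf.mono (Set.Icc_subset_Icc_right hle))
    _ ≤ ∏ i ∈ Finset.Icc 1 t, f i :=
        Finset.prod_le_prod_of_subset_of_one_le' (Finset.Icc_subset_Icc_right hle)
          fun i hi _ => hone i hi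

theorem prod_Icc_one_div_pow_pow_le_prod_Icc_one_pow {t : ℕ} (hf : MonotoneOn f (Set.Icc 1 t))
    (hone : ∀ i ∈ Finset.Icc 1 t, 1 ≤ f i) (a : ℕ) :
    (∏ i ∈ Finset.Icc 1 (t / m), f i ^ a) ^ m ≤ ∏ i ∈ Finset.Icc 1 t, f i ^ a :=
  prod_Icc_one_div_pow_le_prod_Icc_one
    (fun _ hi _ hj hij => pow_le_pow_left' (hf hi hj hij) a)
    fun i hi => one_le_pow_of_one_le' (hone i hi) a

end BlockComparison

section PrimePowerProducts

variable {ι κ : Type*} {s : Finset ι} {u : Finset κ} {p : ι → ℕ} {q : κ → ℕ}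

theorem card_divisors_prod_prime_pow (hp : ∀ i ∈ s, (p i).Prime) (hinj : Set.InjOn p s)
    (a : ι → ℕ) : (∏ i ∈ s, p i ^ a i).divisors.card = ∏ i ∈ s, (a i + 1) := by
  have hcoprime : (s : Set ι).Pairwise (Function.onFun Nat.Coprime fun i => p i ^ a i) :=
    fun i hi j hj hij => Nat.coprime_pow_primes _ _ (hp i hi) (hp j hj) (hinj.ne hi hj hij)
  simp only [← ArithmeticFunction.sigma_zero_apply]
  rw [ArithmeticFunction.isMultiplicative_sigma.map_prod _ s hcoprime]
  exact Finset.prod_congr rfl fun i hi =>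
    ArithmeticFunction.sigma_zero_apply_prime_pow (hp i hi)

theorem coprime_prod_prime_pow (hp : ∀ i ∈ s, (p i).Prime) (hq : ∀ j ∈ u, (q j).Prime)
    (hpq : ∀ i ∈ s, ∀ j ∈ u, p i ≠ q j) (a : ι → ℕ) (b : κ → ℕ) :
    Nat.Coprime (∏ i ∈ s, p i ^ a i) (∏ j ∈ u, q j ^ b j) :=
  Nat.Coprime.prod_left fun i hi => Nat.Coprime.prod_right fun j hj =>
    Nat.coprime_pow_primes _ _ (hp i hi) (hq j hj) (hpq i hi j hj)

theorem card_divisors_prod_prime_pow_mul_prod_prime_pow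
    (hp : ∀ i ∈ s, (p i).Prime) (hq : ∀ j ∈ u, (q j).Prime)
    (hpinj : Set.InjOn p s) (hqinj : Set.InjOn q u)
    (hpq : ∀ i ∈ s, ∀ j ∈ u, p i ≠ q j) (a b : ℕ) :
    ((∏ i ∈ s, p i ^ a) * ∏ j ∈ u, q j ^ b).divisors.card =
      (a + 1) ^ s.card * (b + 1) ^ u.card := by
  rw [(coprime_prod_prime_pow hp hq hpq _ _).card_divisors_mul,
    card_divisors_prod_prime_pow hp hpinj, card_divisors_prod_prime_pow hq hqinj,
    Finset.prod_const, Finset.prod_const]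

end PrimePowerProducts

theorem card_divisors_prod_Icc_one_prime_pow_mul_prod_Icc_one_prime_pow {p q : ℕ → ℕ}
    {t₁ t₂ k l : ℕ} (hp : ∀ i ∈ Finset.Icc 1 t₁, (p i).Prime)
    (hq : ∀ j ∈ Finset.Icc 1 t₂, (q j).Prime)
    (hpinj : Set.InjOn p (Set.Icc 1 t₁)) (hqinj : Set.InjOn q (Set.Icc 1 t₂))
    (hpq : ∀ i ∈ Finset.Icc 1 t₁, ∀ j ∈ Finset.Icc 1 t₂, p i ≠ q j)
    (hk : k ≤ t₁) (hl : l ≤ t₂) (a b : ℕ) :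
    ((∏ i ∈ Finset.Icc 1 k, p i ^ a) * ∏ j ∈ Finset.Icc 1 l, q j ^ b).divisors.card =
      (a + 1) ^ k * (b + 1) ^ l := by
  have hks : Finset.Icc 1 k ⊆ Finset.Icc 1 t₁ := Finset.Icc_subset_Icc_right hk
  have hls : Finset.Icc 1 l ⊆ Finset.Icc 1 t₂ := Finset.Icc_subset_Icc_right hl
  rw [← Finset.coe_Icc] at hpinj hqinj
  rw [card_divisors_prod_prime_pow_mul_prod_prime_pow (fun i hi => hp i (hks hi))
    (fun j hj => hq j (hls hj)) (hpinj.mono (Finset.coe_subset.mpr hks))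
    (hqinj.mono (Finset.coe_subset.mpr hls)) (fun i hi j hj => hpq i (hks hi) j (hls hj)),
    Nat.card_Icc, Nat.card_Icc, Nat.add_sub_cancel, Nat.add_sub_cancel]

theorem mixed_case_limitation (t₁ t₂ : ℕ) (ht₁ : 4 ≤ t₁) (ht₂ : 4 ≤ t₂)
    (p q : ℕ → ℕ)
    (hp : ∀ i ∈ Finset.Icc 1 t₁, (p i).Prime)
    (hq : ∀ j ∈ Finset.Icc 1 t₂, (q j).Prime)
    (hpmono : ∀ i j, 1 ≤ i → i < j → j ≤ t₁ → p i < p j)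
    (hqmono : ∀ i j, 1 ≤ i → i < j → j ≤ t₂ → q i < q j)
    (hpq : ∀ i ∈ Finset.Icc 1 t₁, ∀ j ∈ Finset.Icc 1 t₂, p i ≠ q j)
    (n d : ℕ)
    (hn : n = (∏ i ∈ Finset.Icc 1 t₁, p i ^ 2) * ∏ j ∈ Finset.Icc 1 t₂, q j ^ 3)
    (hd : d = (∏ i ∈ Finset.Icc 1 (t₁ / 4), p i ^ 2) *
      ∏ j ∈ Finset.Icc 1 (t₂ / 4), q j ^ 3) :
    d ∣ n ∧ d ^ 4 ≤ n ∧
    d.divisors.card ^ 6 = 3 ^ (6 * (t₁ / 4)) * 4 ^ (6 * (t₂ / 4)) ∧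
    3 ^ (t₁ - 1) * 4 ^ (t₂ - 1) ≤ 3 ^ (6 * (t₁ / 4)) * 4 ^ (6 * (t₂ / 4)) ∧
    12 * (3 ^ (t₁ - 1) * 4 ^ (t₂ - 1)) = n.divisors.card ∧
    n.divisors.card ≤ 12 * d.divisors.card ^ 6 := by
  have hpStrict : StrictMonoOn p (Set.Icc 1 t₁) := fun i hi j hj hij => hpmono i j hi.1 hij hj.2
  have hqStrict : StrictMonoOn q (Set.Icc 1 t₂) := fun i hi j hj hij => hqmono i j hi.1 hij hj.2
  have hsub (t : ℕ) : Finset.Icc 1 (t / 4) ⊆ Finset.Icc 1 t :=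
    Finset.Icc_subset_Icc_right (Nat.div_le_self t 4)
  have hdvd : d ∣ n := hn ▸ hd ▸ mul_dvd_mul
    (Finset.prod_dvd_prod_of_subset _ _ _ (hsub t₁))
    (Finset.prod_dvd_prod_of_subset _ _ _ (hsub t₂))
  have hle : d ^ 4 ≤ n := by
    rw [hn, hd, mul_pow]
    gcongr ?_ * ?_
    · exact prod_Icc_one_div_pow_pow_le_prod_Icc_one_pow hpStrict.monotoneOn (hp · · |>.one_le) 2
    · exact prod_Icc_one_div_pow_pow_le_prod_Icc_one_pow hqStrict.monotoneOn (hq · · |>.one_le) 3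
  have hcard {k l : ℕ} (hk : k ≤ t₁) (hl : l ≤ t₂) :=
    card_divisors_prod_Icc_one_prime_pow_mul_prod_Icc_one_prime_pow
      hp hq hpStrict.injOn hqStrict.injOn hpq hk hl 2 3
  have hτd : d.divisors.card ^ 6 = 3 ^ (6 * (t₁ / 4)) * 4 ^ (6 * (t₂ / 4)) := by
    rw [hd, hcard (t₁.div_le_self 4) (t₂.div_le_self 4)]; ring
  have hτn : 12 * (3 ^ (t₁ - 1) * 4 ^ (t₂ - 1)) = n.divisors.card := by
    rw [hn, hcard le_rfl le_rfl, ← pow_sub_one_mul (by omega : t₁ ≠ 0),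
      ← pow_sub_one_mul (by omega : t₂ ≠ 0)]; ring
  have hpow : 3 ^ (t₁ - 1) * 4 ^ (t₂ - 1) ≤ 3 ^ (6 * (t₁ / 4)) * 4 ^ (6 * (t₂ / 4)) := by
    gcongr <;> omega
  exact ⟨hdvd, hle, hτd, hpow, hτn, hτn ▸ hτd ▸ Nat.mul_le_mul_left 12 hpow⟩
end

section
/- Fix an integer r ≥ 1. There exists a constant C > 0 (depending at most on r) such that the following holds. Let x ≥ 2, let κ be a real number with x^{-1/(4r)} ≤ κ ≤ 1, let D be a real number with √x ≤ D ≤ x^{(r+1)/(2r)}, let (γ_l) be complex numbers with |γ_l| ≤ 1 for all l and γ_l = 0 unless l = k^r for some positive integer k, and let f : [0, ∞) → ℝ be a smooth function with 0 ≤ f ≤ 1, f(t) = 1 for 0 ≤ t ≤ (1-κ)x, and f(t) = 0 for t ≥ x. Define a_n = ∑_{l² + m² = n, l,m ≥ 1, gcd(l,m) = 1} γ_l, A_d(x) = ∑_{n ≤ x, d | n} a_n, and A_d(f) = ∑_{n ≥ 1, d | n} a_n f(n). Then ∑_{d ≤ D} |A_d(x) - A_d(f)| ≤ C · κ · x^{(r+1)/(2r)}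 · (log x)^{128}. -/
/-!
The two congruence sums differ only through `n` with `(1 - κ) x < n ≤ x`, and summing over `d`
weights `‖a n‖` by at most the number `τ n` of divisors of `n`. Since `n = l ^ 2 + m ^ 2` with
`l = k ^ r`, it remains to sum `τ (l ^ 2 + m ^ 2)` over `m` in the slice of a thin annulus.

Every `n` splits as `n = u v` with `τ u ≤ τ v ≤ 2 τ u`; applying this twice to the smaller factor
produces a divisor `d ≤ n ^ (1 / 4)` of `n` with `τ n ≤ 8 (τ d) ^ 4`. The slice lies in an interval
of length `H = 2 κ x / √(x - l ^ 2 + κ x)`, which is at least `x ^ (1 / 4)`, so for each such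
modulus `d` it contains `O (τ d * H / d)` roots of `l ^ 2 + m ^ 2 ≡ 0`, and the divisor sums cost
only powers of `log x`. Summing `H` over `k ≤ x ^ (1 / (2 r))` gives `κ x ^ ((r + 1) / (2 r))`.
-/

open Finset

namespace GaussianSmoothing

section Divisors

lemma card_divisors_mul_le (a b : ℕ) : #(a * b).divisors ≤ #a.divisors * #b.divisors := by
  rw [Nat.divisors_mul]
  exact card_mul_le

lemma card_divisors_prime_pow {p : ℕ} (hp : p.Prime) (k : ℕ) : #(p ^ k).divisors = k + 1 := by
  rw [Nat.divisors_prime_pow hp, card_map, card_range]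

lemma exists_eq_mul_card_divisors_le (n : ℕ) :
    ∃ u v, n = u * v ∧ #u.divisors ≤ #v.divisors ∧ #v.divisors ≤ 2 * #u.divisors := by
  induction n using Nat.recOnPrimeCoprime with
  | zero => exact ⟨0, 0, by simp⟩
  | prime_pow p k hp =>
    refine ⟨p ^ (k / 2), p ^ (k - k / 2), ?_, ?_⟩
    · rw [← pow_add, Nat.add_sub_cancel' (k.div_le_self 2)]
    · rw [card_divisors_prime_pow hp, card_divisors_prime_pow hp]
      omega
  | coprime a b _ _ hab iha ihb =>
    obtain ⟨u, v, rfl, huv, hvu⟩ := iha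
    obtain ⟨s, t, rfl, hst, hts⟩ := ihb
    have hut : #(u * t).divisors = #u.divisors * #t.divisors :=
      Nat.Coprime.card_divisors_mul hab.coprime_mul_right.coprime_mul_left_right
    have hvs : #(v * s).divisors = #v.divisors * #s.divisors :=
      Nat.Coprime.card_divisors_mul hab.coprime_mul_left.coprime_mul_right_right
    -- Pairing the poorer factor of `a` with the richer factor of `b` keeps the ratio within `2`.
    rcases le_total #(u * t).divisors #(v * s).divisors with h | h
    · refine ⟨u * t, v * s, by ring, h, ?_⟩
      calc #(v * s).divisors ≤ 2 * #u.divisors * #t.divisors := by rw [hvs]; gcongr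
        _ = 2 * #(u * t).divisors := by rw [hut, mul_assoc]
    · refine ⟨v * s, u * t, by ring, h, ?_⟩
      calc #(u * t).divisors ≤ #v.divisors * (2 * #s.divisors) := by rw [hut]; gcongr
        _ = 2 * #(v * s).divisors := by rw [hvs]; ring

lemma exists_dvd_sq_le_card_divisors_le (n : ℕ) :
    ∃ d, d ∣ n ∧ d ^ 2 ≤ n ∧ #n.divisors ≤ 2 * #d.divisors ^ 2 := by
  obtain ⟨u, v, rfl, huv, hvu⟩ := exists_eq_mul_card_divisors_le n
  have hmul := card_divisors_mul_le u v
  rcases le_total u v with h | h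
  · exact ⟨u, dvd_mul_right u v, by nlinarith, by nlinarith⟩
  · exact ⟨v, dvd_mul_left v u, by nlinarith, by nlinarith⟩

lemma exists_dvd_pow_le_card_divisors_le (n k : ℕ) :
    ∃ d, d ∣ n ∧ d ^ 2 ^ k ≤ n ∧ 2 * #n.divisors ≤ (2 * #d.divisors) ^ 2 ^ k := by
  induction k with
  | zero => exact ⟨n, by simp⟩
  | succ k ih =>
    obtain ⟨d, hdn, hd, hτd⟩ := ih
    obtain ⟨e, hed, he, hτe⟩ := exists_dvd_sq_le_card_divisors_le d
    refine ⟨e, hed.trans hdn, ?_, ?_⟩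
    · calc e ^ 2 ^ (k + 1) = (e ^ 2) ^ 2 ^ k := by rw [pow_succ', pow_mul]
        _ ≤ d ^ 2 ^ k := by gcongr
        _ ≤ n := hd
    · calc 2 * #n.divisors ≤ (2 * #d.divisors) ^ 2 ^ k := hτd
        _ ≤ (2 * (2 * #e.divisors ^ 2)) ^ 2 ^ k := by gcongr
        _ = (2 * #e.divisors) ^ 2 ^ (k + 1) := by rw [pow_succ' 2 k, pow_mul]; ring

lemma card_divisors_le_sum_dvd_floor {n : ℕ} (hn : n ≠ 0) {z : ℝ} (hz : 0 ≤ z) (k : ℕ)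
    (hnz : (n : ℝ) ≤ z ^ 2 ^ k) :
    2 * (#n.divisors : ℝ) ≤ ∑ d ∈ Icc 1 ⌊z⌋₊ with d ∣ n, (2 * (#d.divisors : ℝ)) ^ 2 ^ k := by
  obtain ⟨d, hdn, hd, hτ⟩ := exists_dvd_pow_le_card_divisors_le n k
  have hdz : (d : ℝ) ≤ z := by
    refine le_of_pow_le_pow_left₀ (pow_ne_zero k two_ne_zero) hz (le_trans ?_ hnz)
    exact_mod_cast hd
  have hmem : d ∈ {d ∈ Icc 1 ⌊z⌋₊ | d ∣ n} := by
    rw [mem_filter, mem_Icc]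
    exact ⟨⟨Nat.pos_of_dvd_of_pos hdn hn.bot_lt, Nat.le_floor hdz⟩, hdn⟩
  calc 2 * (#n.divisors : ℝ) ≤ (2 * (#d.divisors : ℝ)) ^ 2 ^ k := by exact_mod_cast hτ
    _ ≤ _ := single_le_sum (f := fun d : ℕ ↦ (2 * (#d.divisors : ℝ)) ^ 2 ^ k)
        (fun _ _ ↦ by positivity) hmem

lemma sum_sum_divisorsAntidiagonal_le {g : ℕ → ℝ} (hg : ∀ n, 0 ≤ g n) (Y : ℕ) :
    ∑ n ∈ Icc 1 Y, ∑ p ∈ n.divisorsAntidiagonal, g p.1 * g p.2 ≤ (∑ n ∈ Icc 1 Y, g n) ^ 2 := by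
  have hgg (p : ℕ × ℕ) : 0 ≤ g p.1 * g p.2 := mul_nonneg (hg _) (hg _)
  have hsub (n : ℕ) (hn : n ∈ Icc 1 Y) :
      n.divisorsAntidiagonal ⊆ {p ∈ Icc 1 Y ×ˢ Icc 1 Y | p.1 * p.2 = n} := by
    rintro ⟨a, b⟩ hab
    obtain ⟨rfl, hne⟩ := Nat.mem_divisorsAntidiagonal.1 hab
    have ha : 0 < a := Nat.pos_of_ne_zero (left_ne_zero_of_mul hne)
    have hb : 0 < b := Nat.pos_of_ne_zero (right_ne_zero_of_mul hne)
    have hY : a * b ≤ Y := (mem_Icc.1 hn).2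
    simp only [mem_filter, mem_product, mem_Icc, and_true]
    exact ⟨⟨ha, (Nat.le_mul_of_pos_right a hb).trans hY⟩,
      hb, (Nat.le_mul_of_pos_left b ha).trans hY⟩
  calc ∑ n ∈ Icc 1 Y, ∑ p ∈ n.divisorsAntidiagonal, g p.1 * g p.2
      ≤ ∑ n ∈ Icc 1 Y, ∑ p ∈ Icc 1 Y ×ˢ Icc 1 Y with p.1 * p.2 = n, g p.1 * g p.2 :=
        sum_le_sum fun n hn ↦ sum_le_sum_of_subset_of_nonneg (hsub n hn) fun p _ _ ↦ hgg p
    _ ≤ ∑ p ∈ Icc 1 Y ×ˢ Icc 1 Y, g p.1 * g p.2 :=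
        sum_fiberwise_le_sum_of_sum_fiber_nonneg fun _ _ ↦ sum_nonneg fun p _ ↦ hgg p
    _ = (∑ n ∈ Icc 1 Y, g n) ^ 2 := by rw [sum_product, ← sum_mul_sum, sq]

lemma card_divisors_pow_succ_div_le (n j : ℕ) :
    (#n.divisors : ℝ) ^ (j + 1) / n ≤ ∑ p ∈ n.divisorsAntidiagonal,
      ((#p.1.divisors : ℝ) ^ j / p.1) * ((#p.2.divisors : ℝ) ^ j / p.2) := by
  calc (#n.divisors : ℝ) ^ (j + 1) / n
      = ∑ _p ∈ n.divisorsAntidiagonal, (#n.divisors : ℝ) ^ j / n := by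
        rw [sum_const, ← Nat.map_div_right_divisors, card_map, nsmul_eq_mul]
        ring
    _ ≤ _ := by
        refine sum_le_sum fun p hp ↦ ?_
        rw [← (Nat.mem_divisorsAntidiagonal.1 hp).1, div_mul_div_comm, ← mul_pow, Nat.cast_mul]
        gcongr
        exact_mod_cast card_divisors_mul_le p.1 p.2

lemma sum_card_divisors_pow_div_le_harmonic_pow (Y j : ℕ) :
    ∑ d ∈ Icc 1 Y, (#d.divisors : ℝ) ^ j / d ≤ (harmonic Y : ℝ) ^ 2 ^ j := by
  induction j with
  | zero => simp [harmonic_eq_sum_Icc]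
  | succ j ih =>
    calc ∑ d ∈ Icc 1 Y, (#d.divisors : ℝ) ^ (j + 1) / d
        ≤ ∑ d ∈ Icc 1 Y, ∑ p ∈ d.divisorsAntidiagonal,
            ((#p.1.divisors : ℝ) ^ j / p.1) * ((#p.2.divisors : ℝ) ^ j / p.2) :=
          sum_le_sum fun d _ ↦ card_divisors_pow_succ_div_le d j
      _ ≤ (∑ d ∈ Icc 1 Y, (#d.divisors : ℝ) ^ j / d) ^ 2 :=
          sum_sum_divisorsAntidiagonal_le (g := fun d : ℕ ↦ (#d.divisors : ℝ) ^ j / d)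
            (fun _ ↦ by positivity) Y
      _ ≤ ((harmonic Y : ℝ) ^ 2 ^ j) ^ 2 := by gcongr
      _ = (harmonic Y : ℝ) ^ 2 ^ (j + 1) := by rw [← pow_mul, ← pow_succ]

lemma sum_card_divisors_pow_div_le {z : ℝ} (hz : 1 ≤ z) (j : ℕ) :
    ∑ d ∈ Icc 1 ⌊z⌋₊, (#d.divisors : ℝ) ^ j / d ≤ (1 + Real.log z) ^ 2 ^ j := by
  have hharm : (0 : ℝ) ≤ harmonic ⌊z⌋₊ := by
    exact_mod_cast sum_nonneg fun _ _ ↦ by positivity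
  exact (sum_card_divisors_pow_div_le_harmonic_pow _ j).trans
    (pow_le_pow_left₀ hharm (harmonic_floor_le_one_add_log z hz) _)

lemma sum_norm_sum_dvd_le {E : Type*} [SeminormedAddCommGroup E] (D N : Finset ℕ) (hN : 0 ∉ N)
    (b : ℕ → E) :
    ∑ d ∈ D, ‖∑ n ∈ N with d ∣ n, b n‖ ≤ ∑ n ∈ N, #n.divisors * ‖b n‖ := by
  have hsub (n : ℕ) (hn : n ∈ N) : {d ∈ D | d ∣ n} ⊆ n.divisors := fun d hd ↦
    Nat.mem_divisors.2 ⟨(mem_filter.1 hd).2, ne_of_mem_of_not_mem hn hN⟩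
  calc ∑ d ∈ D, ‖∑ n ∈ N with d ∣ n, b n‖
      ≤ ∑ d ∈ D, ∑ n ∈ N, if d ∣ n then ‖b n‖ else 0 := by
        refine sum_le_sum fun d _ ↦ (norm_sum_le _ _).trans ?_
        rw [sum_filter]
    _ = ∑ n ∈ N, #{d ∈ D | d ∣ n} * ‖b n‖ := by
        rw [sum_comm]
        simp only [← sum_filter, sum_const, nsmul_eq_mul]
    _ ≤ ∑ n ∈ N, #n.divisors * ‖b n‖ := by
        gcongr with n hn
        exact hsub n hn

end Divisors

section Congruence

-- With `g` the common gcd, `d` divides `(m - m') (m + m₀)` and `(m - m') (m - m₀)`, hence their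
-- difference `2 m₀ (m - m')`.
lemma dvd_two_mul_sub_of_gcd_eq {R : Type*} [CommRing R] [GCDMonoid R]
    {d m₀ m m' : R} (hm₀ : IsCoprime d m₀) (hm : d ∣ m ^ 2 - m₀ ^ 2) (hm' : d ∣ m' ^ 2 - m₀ ^ 2)
    (hgcd : gcd d (m - m₀) = gcd d (m' - m₀)) : d ∣ 2 * (m - m') := by
  set g := gcd d (m - m₀)
  have hg_left : g ∣ m - m₀ := gcd_dvd_right _ _
  have hg_sub : g ∣ m - m' := by
    have := dvd_sub hg_left (hgcd ▸ gcd_dvd_right d (m' - m₀))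
    rwa [sub_sub_sub_cancel_right] at this
  have hadd : d ∣ g * (m + m₀) :=
    dvd_gcd_mul_of_dvd_mul (by rwa [mul_comm, ← sq_sub_sq])
  have hadd' : d ∣ g * (m' + m₀) := by
    rw [hgcd]
    exact dvd_gcd_mul_of_dvd_mul (by rwa [mul_comm, ← sq_sub_sq])
  have hplus : d ∣ (m - m') * (m + m₀) := hadd.trans (mul_dvd_mul_right hg_sub _)
  have hminus : d ∣ (m - m₀) * (m - m') := by
    have hg_mul : d ∣ g * (m - m') := by
      have := dvd_sub hadd hadd'
      rwa [← mul_sub, add_sub_add_right_eq_sub] at this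
    exact hg_mul.trans (mul_dvd_mul_right hg_left _)
  refine hm₀.dvd_of_dvd_mul_left ?_
  convert! dvd_sub hplus hminus using 1
  ring

lemma card_le_of_dvd_mul_sub {S : Finset ℕ} {c d : ℕ} (hc : c ≠ 0) (hd : 0 < d) {H : ℝ}
    (hH : 0 ≤ H) (hS : ∀ m ∈ S, ∀ m' ∈ S, (m : ℝ) - m' ≤ H)
    (hdvd : ∀ m ∈ S, ∀ m' ∈ S, (d : ℤ) ∣ c * ((m : ℤ) - m')) :
    (#S : ℝ) ≤ c * H / d + 1 := by
  rcases S.eq_empty_or_nonempty with rfl | hne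
  · rw [card_empty, Nat.cast_zero]
    positivity
  set m₀ := S.min' hne
  have hm₀ : m₀ ∈ S := S.min'_mem hne
  have hmin (m : ℕ) (hm : m ∈ S) : m₀ ≤ m := S.min'_le m hm
  have hdvd₀ (m : ℕ) (hm : m ∈ S) : d ∣ c * (m - m₀) := by
    zify [hmin m hm]
    exact hdvd m hm m₀ hm₀
  have hcard : #S ≤ #(range (⌊c * H / d⌋₊ + 1)) := by
    refine card_le_card_of_injOn (fun m ↦ c * (m - m₀) / d) (fun m hm ↦ ?_) fun m hm m' hm' h ↦ ?_
    · have hle : ((c * (m - m₀) / d : ℕ) : ℝ) ≤ c * H / d := by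
        refine Nat.cast_div_le.trans ?_
        push_cast [Nat.cast_sub (hmin m hm)]
        gcongr
        exact hS m hm m₀ hm₀
      exact mem_coe.2 (mem_range_succ_iff.2 (Nat.le_floor hle))
    · have h' : c * (m - m₀) = c * (m' - m₀) := by
        rw [← Nat.div_mul_cancel (hdvd₀ m hm), ← Nat.div_mul_cancel (hdvd₀ m' hm')]
        exact congrArg (· * d) h
      exact (tsub_left_inj (hmin m hm) (hmin m' hm')).1 (Nat.eq_of_mul_eq_mul_left hc.bot_lt h')
  rw [card_range] at hcard
  calc (#S : ℝ) ≤ ⌊c * H / d⌋₊ + 1 := by exact_mod_cast hcard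
    _ ≤ c * H / d + 1 := by gcongr; exact Nat.floor_le (by positivity)

lemma card_le_of_dvd_sq_add_sq {S : Finset ℕ} {l d : ℕ} (hd : 0 < d) {H : ℝ} (hH : 0 ≤ H)
    (hS : ∀ m ∈ S, ∀ m' ∈ S, (m : ℝ) - m' ≤ H) (hcop : ∀ m ∈ S, l.Coprime m)
    (hdvd : ∀ m ∈ S, d ∣ l ^ 2 + m ^ 2) :
    (#S : ℝ) ≤ #d.divisors * (2 * H / d + 1) := by
  rcases S.eq_empty_or_nonempty with rfl | ⟨m₀, hm₀⟩
  · rw [card_empty, Nat.cast_zero]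
    positivity
  have hdm₀ : IsCoprime (d : ℤ) m₀ := by
    have hsq : (l ^ 2 + m₀ ^ 2).Coprime m₀ := by
      rw [sq m₀, Nat.coprime_add_mul_right_left]
      exact (hcop m₀ hm₀).pow_left 2
    exact Nat.isCoprime_iff_coprime.2 (hsq.coprime_dvd_left (hdvd m₀ hm₀))
  have hsq_sub (m : ℕ) (hm : m ∈ S) : (d : ℤ) ∣ (m : ℤ) ^ 2 - (m₀ : ℤ) ^ 2 := by
    have := dvd_sub (Int.natCast_dvd_natCast.2 (hdvd m hm))
      (Int.natCast_dvd_natCast.2 (hdvd m₀ hm₀))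
    push_cast at this
    rwa [add_sub_add_left_eq_sub] at this
  have hmaps : ∀ m ∈ S, Int.gcd d ((m : ℤ) - m₀) ∈ d.divisors := fun m _ ↦
    Nat.mem_divisors.2 ⟨Int.natCast_dvd_natCast.1 (Int.gcd_dvd_left _ _), hd.ne'⟩
  rw [card_eq_sum_card_fiberwise hmaps, Nat.cast_sum, ← nsmul_eq_mul]
  refine sum_le_card_nsmul _ _ _ fun g _ ↦ ?_
  refine card_le_of_dvd_mul_sub two_ne_zero hd hH ?_ ?_
  · exact fun m hm m' hm' ↦ hS m (mem_filter.1 hm).1 m' (mem_filter.1 hm').1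
  · intro m hm m' hm'
    obtain ⟨hmS, hmg⟩ := mem_filter.1 hm
    obtain ⟨hm'S, hm'g⟩ := mem_filter.1 hm'
    refine dvd_two_mul_sub_of_gcd_eq hdm₀ (hsq_sub m hmS) (hsq_sub m' hm'S) ?_
    rw [← Int.coe_gcd, ← Int.coe_gcd, hmg, hm'g]

end Congruence

section DivisorSums

lemma two_mul_sum_card_divisors_sq_add_sq_le {S : Finset ℕ} {l : ℕ} {z H : ℝ} (k : ℕ)
    (hz : 1 ≤ z) (hzH : z ≤ H) (hS : ∀ m ∈ S, ∀ m' ∈ S, (m : ℝ) - m' ≤ H)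
    (hcop : ∀ m ∈ S, l.Coprime m) (hle : ∀ m ∈ S, ((l ^ 2 + m ^ 2 : ℕ) : ℝ) ≤ z ^ 2 ^ k) :
    2 * ∑ m ∈ S, (#(l ^ 2 + m ^ 2).divisors : ℝ) ≤
      3 * 2 ^ 2 ^ k * H * (1 + Real.log z) ^ 2 ^ (2 ^ k + 1) := by
  have hne (m : ℕ) (hm : m ∈ S) : l ^ 2 + m ^ 2 ≠ 0 := by
    intro h
    obtain ⟨rfl, rfl⟩ : l = 0 ∧ m = 0 := by simpa using h
    exact absurd (hcop 0 hm) (by norm_num)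
  have hcount (d : ℕ) (hd : d ∈ Icc 1 ⌊z⌋₊) :
      (#{m ∈ S | d ∣ l ^ 2 + m ^ 2} : ℝ) ≤ #d.divisors * (3 * H / d) := by
    obtain ⟨hd1, hdz⟩ := mem_Icc.1 hd
    have hd0 : (0 : ℝ) < d := by exact_mod_cast hd1
    have hdH : 1 ≤ H / d := by
      rw [one_le_div hd0]
      exact ((Nat.le_floor_iff (by positivity)).1 hdz).trans hzH
    calc (#{m ∈ S | d ∣ l ^ 2 + m ^ 2} : ℝ) ≤ #d.divisors * (2 * H / d + 1) :=
          card_le_of_dvd_sq_add_sq hd1 (by linarith)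
            (fun m hm m' hm' ↦ hS m (mem_filter.1 hm).1 m' (mem_filter.1 hm').1)
            (fun m hm ↦ hcop m (mem_filter.1 hm).1) (fun m hm ↦ (mem_filter.1 hm).2)
      _ ≤ #d.divisors * (3 * H / d) := by
          gcongr
          rw [mul_div_assoc, mul_div_assoc]
          linarith
  calc 2 * ∑ m ∈ S, (#(l ^ 2 + m ^ 2).divisors : ℝ)
      ≤ ∑ m ∈ S, ∑ d ∈ Icc 1 ⌊z⌋₊ with d ∣ l ^ 2 + m ^ 2, (2 * (#d.divisors : ℝ)) ^ 2 ^ k := by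
        rw [mul_sum]
        exact sum_le_sum fun m hm ↦
          card_divisors_le_sum_dvd_floor (hne m hm) (by linarith) k (hle m hm)
    _ = ∑ d ∈ Icc 1 ⌊z⌋₊, #{m ∈ S | d ∣ l ^ 2 + m ^ 2} * (2 * (#d.divisors : ℝ)) ^ 2 ^ k := by
        simp only [sum_filter]
        rw [sum_comm]
        simp only [← sum_filter, sum_const, nsmul_eq_mul]
    _ ≤ ∑ d ∈ Icc 1 ⌊z⌋₊, #d.divisors * (3 * H / d) * (2 * (#d.divisors : ℝ)) ^ 2 ^ k := by
        gcongr with d hd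
        exact hcount d hd
    _ = 3 * 2 ^ 2 ^ k * H * ∑ d ∈ Icc 1 ⌊z⌋₊, (#d.divisors : ℝ) ^ (2 ^ k + 1) / d := by
        rw [mul_sum]
        exact sum_congr rfl fun d _ ↦ by ring
    _ ≤ 3 * 2 ^ 2 ^ k * H * (1 + Real.log z) ^ 2 ^ (2 ^ k + 1) := by
        have hH : 0 ≤ H := by linarith
        gcongr
        exact sum_card_divisors_pow_div_le hz _

end DivisorSums

section AnnulusSlice

/-- The slice at first coordinate `l` of the primitive lattice points `(l, m)` with `m ≥ 1` in the
annulus `u < l ^ 2 + m ^ 2 ≤ v`. -/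
noncomputable def annulusSlice (u v : ℝ) (l : ℕ) : Finset ℕ :=
  {m ∈ Icc 1 ⌊v⌋₊ | l.Coprime m ∧ u < (l ^ 2 + m ^ 2 : ℕ) ∧ ((l ^ 2 + m ^ 2 : ℕ) : ℝ) ≤ v}

lemma mem_annulusSlice {u v : ℝ} {l m : ℕ} :
    m ∈ annulusSlice u v l ↔ 0 < m ∧ l.Coprime m ∧ u < (l ^ 2 + m ^ 2 : ℕ) ∧
      ((l ^ 2 + m ^ 2 : ℕ) : ℝ) ≤ v := by
  rw [annulusSlice, mem_filter, mem_Icc, and_assoc]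
  refine and_congr_right fun hm ↦ and_iff_right_of_imp fun h ↦ ?_
  exact (by nlinarith : m ≤ l ^ 2 + m ^ 2).trans (Nat.le_floor h.2.2)

lemma sub_le_two_mul_div_sqrt {a b y δ : ℝ} (hb : 0 ≤ b) (hδ : 0 < δ) (ha : a ^ 2 ≤ y)
    (hby : y - δ ≤ b ^ 2) : a - b ≤ 2 * δ / √(y + δ) := by
  have hy : 0 < y + δ := by linarith [sq_nonneg a]
  rcases le_total a b with hab | hba
  · exact (sub_nonpos.2 hab).trans (by positivity)
  have hsq : (a - b) ^ 2 ≤ δ := by nlinarith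
  have hprod : (a - b) ^ 2 * y ≤ δ ^ 2 := by
    have hsqrt : (a - b) * √y ≤ δ := by
      have hay : a ≤ √y := Real.le_sqrt_of_sq_le ha
      have hy' : √y ^ 2 = y := Real.sq_sqrt ((sq_nonneg a).trans ha)
      nlinarith [Real.sqrt_nonneg y]
    have := pow_le_pow_left₀ (mul_nonneg (sub_nonneg.2 hba) (Real.sqrt_nonneg y)) hsqrt 2
    rwa [mul_pow, Real.sq_sqrt ((sq_nonneg a).trans ha)] at this
  rw [le_div_iff₀ (Real.sqrt_pos.2 hy)]
  refine le_of_pow_le_pow_left₀ two_ne_zero (by positivity) ?_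
  rw [mul_pow, Real.sq_sqrt hy.le]
  nlinarith

lemma sub_le_of_mem_annulusSlice {x δ : ℝ} {l m m' : ℕ} (hδ : 0 < δ)
    (hm : m ∈ annulusSlice (x - δ) x l) (hm' : m' ∈ annulusSlice (x - δ) x l) :
    (m : ℝ) - m' ≤ 2 * δ / √(x - l ^ 2 + δ) := by
  have hm_le := (mem_annulusSlice.1 hm).2.2.2
  have hm'_gt := (mem_annulusSlice.1 hm').2.2.1
  push_cast at hm_le hm'_gt
  exact sub_le_two_mul_div_sqrt m'.cast_nonneg hδ (by linarith) (by linarith)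

lemma sqrt_sqrt_pow_four {x : ℝ} (hx : 0 ≤ x) : √√x ^ 4 = x := by
  rw [pow_mul _ 2 2, Real.sq_sqrt (Real.sqrt_nonneg x), Real.sq_sqrt hx]

lemma sqrt_sqrt_le_two_mul_div_sqrt {x y δ : ℝ} (hy : 0 ≤ y) (hyx : y ≤ x) (hδ : 0 < δ)
    (hδx : δ ≤ x) (hxδ : x ^ 3 ≤ δ ^ 4) : √√x ≤ 2 * δ / √(y + δ) := by
  have hx : 0 < x := hδ.trans_le hδx
  rw [le_div_iff₀ (Real.sqrt_pos.2 (by linarith))]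
  refine le_of_pow_le_pow_left₀ four_ne_zero (by positivity) ?_
  have hfour : √(y + δ) ^ 4 = (y + δ) ^ 2 := by
    rw [pow_mul _ 2 2, Real.sq_sqrt (by linarith)]
  calc (√√x * √(y + δ)) ^ 4 = x * (y + δ) ^ 2 := by rw [mul_pow, sqrt_sqrt_pow_four hx.le, hfour]
    _ ≤ x * (x + x) ^ 2 := by gcongr
    _ = 4 * x ^ 3 := by ring
    _ ≤ (2 * δ) ^ 4 := by nlinarith [pow_pos hδ 4]

lemma sum_annulusSlice_card_divisors_le {x δ : ℝ} {l : ℕ} (hl : (l : ℝ) ^ 2 ≤ x) (hδ : 0 < δ)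
    (hδx : δ ≤ x) (hxδ : x ^ 3 ≤ δ ^ 4) :
    ∑ m ∈ annulusSlice (x - δ) x l, (#(l ^ 2 + m ^ 2).divisors : ℝ) ≤
      48 * δ * (1 + Real.log x) ^ 32 * (1 / √(x - l ^ 2 + δ)) := by
  have hx : 0 < x := hδ.trans_le hδx
  have hx1 : 1 ≤ x := by
    have : x ^ 3 * 1 ≤ x ^ 3 * x := by
      calc x ^ 3 * 1 ≤ δ ^ 4 := by rwa [mul_one]
        _ ≤ x ^ 4 := by gcongr
        _ = x ^ 3 * x := by ring
    exact le_of_mul_le_mul_left this (by positivity)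
  have hz : 1 ≤ √√x := Real.one_le_sqrt.2 (Real.one_le_sqrt.2 hx1)
  have hzx : √√x ^ 2 ^ 2 = x := sqrt_sqrt_pow_four hx.le
  have hlog : Real.log √√x ≤ Real.log x :=
    Real.log_le_log (by positivity) ((le_self_pow₀ hz (by norm_num)).trans_eq hzx)
  have hsum := two_mul_sum_card_divisors_sq_add_sq_le 2 hz
    (sqrt_sqrt_le_two_mul_div_sqrt (sub_nonneg.2 hl) (sub_le_self x (sq_nonneg _)) hδ hδx hxδ)
    (fun m hm m' hm' ↦ sub_le_of_mem_annulusSlice hδ hm hm')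
    (fun m hm ↦ (mem_annulusSlice.1 hm).2.1)
    (fun m hm ↦ (mem_annulusSlice.1 hm).2.2.2.trans_eq hzx.symm)
  have hlogz : 0 ≤ Real.log √√x := Real.log_nonneg hz
  calc ∑ m ∈ annulusSlice (x - δ) x l, (#(l ^ 2 + m ^ 2).divisors : ℝ)
      ≤ 48 * δ * (1 + Real.log √√x) ^ 32 * (1 / √(x - l ^ 2 + δ)) := by
        norm_num at hsum ⊢
        linear_combination hsum / 2
    _ ≤ 48 * δ * (1 + Real.log x) ^ 32 * (1 / √(x - l ^ 2 + δ)) := by gcongr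

end AnnulusSlice

section PowerSums

lemma sum_range_one_div_sqrt_le (N : ℕ) :
    ∑ k ∈ range N, 1 / √((k : ℝ) + 1) ≤ 2 * √N := by
  induction N with
  | zero => simp
  | succ N ih =>
    have hstep : 1 / √((N : ℝ) + 1) ≤ 2 * √(N + 1) - 2 * √N := by
      rw [div_le_iff₀ (Real.sqrt_pos.2 (by positivity))]
      nlinarith [sq_nonneg (√((N : ℝ) + 1) - √N), Real.sq_sqrt (N.cast_nonneg (α := ℝ)),
        Real.sq_sqrt (show (0 : ℝ) ≤ N + 1 by positivity)]
    rw [sum_range_succ, Nat.cast_succ]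
    linarith

lemma sum_Icc_one_div_sqrt_sub_le (N : ℕ) :
    ∑ k ∈ Icc 1 N, 1 / √((N : ℝ) - k + 1) ≤ 2 * √N := by
  refine le_of_eq_of_le ?_ (sum_range_one_div_sqrt_le N)
  refine sum_nbij' (N - ·) (N - ·) ?_ ?_ ?_ ?_ fun k hk ↦ ?_
  · simp only [mem_Icc, mem_range]; omega
  · simp only [mem_Icc, mem_range]; omega
  · simp only [mem_Icc]; omega
  · simp only [mem_range]; omega
  · rw [Nat.cast_sub (mem_Icc.1 hk).2]

lemma pow_mul_sub_add_one_le {K δ : ℝ} {k : ℕ} {s : ℕ} (hs : s ≠ 0) (hkK : (k : ℝ) ≤ K)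
    (hδ : K ^ (s - 1) ≤ δ) : K ^ (s - 1) * (K - k + 1) ≤ K ^ s - (k : ℝ) ^ s + δ := by
  obtain ⟨t, rfl⟩ := Nat.exists_eq_succ_of_ne_zero hs
  rw [Nat.succ_sub_one] at hδ ⊢
  have hpow : (k : ℝ) ^ t ≤ K ^ t := pow_le_pow_left₀ k.cast_nonneg hkK t
  rw [pow_succ, pow_succ]
  nlinarith [k.cast_nonneg (α := ℝ)]

lemma sum_one_div_sqrt_pow_sub_pow_le {K δ : ℝ} {s : ℕ} (hs : s ≠ 0) (hK : 0 < K)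
    (hδ : K ^ (s - 1) ≤ δ) :
    ∑ k ∈ Icc 1 ⌊K⌋₊, 1 / √(K ^ s - (k : ℝ) ^ s + δ) ≤ 2 * K / √(K ^ s) := by
  have hfloor : (⌊K⌋₊ : ℝ) ≤ K := Nat.floor_le hK.le
  have hterm (k : ℕ) (hk : k ∈ Icc 1 ⌊K⌋₊) :
      1 / √(K ^ s - (k : ℝ) ^ s + δ) ≤ 1 / √(K ^ (s - 1)) * (1 / √((⌊K⌋₊ : ℝ) - k + 1)) := by
    have hkN : (k : ℝ) ≤ ⌊K⌋₊ := by exact_mod_cast (mem_Icc.1 hk).2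
    have : 0 < (⌊K⌋₊ : ℝ) - k + 1 := by linarith
    rw [one_div_mul_one_div, ← Real.sqrt_mul (by positivity)]
    gcongr
    calc K ^ (s - 1) * ((⌊K⌋₊ : ℝ) - k + 1) ≤ K ^ (s - 1) * (K - k + 1) := by gcongr
      _ ≤ K ^ s - (k : ℝ) ^ s + δ := pow_mul_sub_add_one_le hs (hkN.trans hfloor) hδ
  calc ∑ k ∈ Icc 1 ⌊K⌋₊, 1 / √(K ^ s - (k : ℝ) ^ s + δ)
      ≤ 1 / √(K ^ (s - 1)) * ∑ k ∈ Icc 1 ⌊K⌋₊, 1 / √((⌊K⌋₊ : ℝ) - k + 1) := by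
        rw [mul_sum]
        exact sum_le_sum hterm
    _ ≤ 1 / √(K ^ (s - 1)) * (2 * √K) := by
        gcongr
        exact (sum_Icc_one_div_sqrt_sub_le _).trans (by gcongr)
    _ = 2 * K / √(K ^ s) := by
        rw [← pow_sub_one_mul hs K, Real.sqrt_mul (by positivity)]
        field_simp
        rw [Real.sq_sqrt hK.le]

lemma sum_norm_mul_le_sum_pow {E : Type*} [SeminormedAddGroup E] {r : ℕ} (hr : r ≠ 0) {K : ℝ}
    (hK : 0 ≤ K) {γ : ℕ → E} (hγ : ∀ l, ‖γ l‖ ≤ 1)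
    (hsupp : ∀ l, (¬ ∃ k : ℕ, 1 ≤ k ∧ l = k ^ r) → γ l = 0) {g : ℕ → ℝ} (hg : ∀ l, 0 ≤ g l) :
    ∑ l ∈ Icc 1 ⌊K ^ r⌋₊, ‖γ l‖ * g l ≤ ∑ k ∈ Icc 1 ⌊K⌋₊, g (k ^ r) := by
  have hvanish (l : ℕ) (hl : l ∈ Icc 1 ⌊K ^ r⌋₊) (hlim : l ∉ (Icc 1 ⌊K⌋₊).image (· ^ r)) :
      ‖γ l‖ * g l = 0 := by
    rw [hsupp l, norm_zero, zero_mul]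
    rintro ⟨k, hk, rfl⟩
    refine hlim (mem_image_of_mem _ (mem_Icc.2 ⟨hk, Nat.le_floor ?_⟩))
    have hle := (Nat.le_floor_iff (by positivity)).1 (mem_Icc.1 hl).2
    exact le_of_pow_le_pow_left₀ hr hK (by exact_mod_cast hle)
  calc ∑ l ∈ Icc 1 ⌊K ^ r⌋₊, ‖γ l‖ * g l
      = ∑ l ∈ Icc 1 ⌊K ^ r⌋₊ with l ∈ (Icc 1 ⌊K⌋₊).image (· ^ r), ‖γ l‖ * g l :=
        (sum_filter_of_ne fun l hl hne ↦ by_contra fun h ↦ hne (hvanish l hl h)).symm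
    _ ≤ ∑ l ∈ Icc 1 ⌊K ^ r⌋₊ with l ∈ (Icc 1 ⌊K⌋₊).image (· ^ r), g l :=
        sum_le_sum fun l _ ↦ mul_le_of_le_one_left (hg l) (hγ l)
    _ ≤ ∑ l ∈ (Icc 1 ⌊K⌋₊).image (· ^ r), g l :=
        sum_le_sum_of_subset_of_nonneg (fun _ hl ↦ (mem_filter.1 hl).2) fun l _ _ ↦ hg l
    _ = ∑ k ∈ Icc 1 ⌊K⌋₊, g (k ^ r) := sum_image (Nat.pow_left_injective hr).injOn

end PowerSums

section GaussianCoeff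

/-- The pairs `(l, m)` of coprime positive integers with `l ^ 2 + m ^ 2 = n`. -/
def primitiveReps (n : ℕ) : Finset (ℕ × ℕ) :=
  {lm ∈ Icc 1 n ×ˢ Icc 1 n | lm.1 ^ 2 + lm.2 ^ 2 = n ∧ Nat.gcd lm.1 lm.2 = 1}

lemma mem_primitiveReps {n l m : ℕ} :
    (l, m) ∈ primitiveReps n ↔ 0 < l ∧ 0 < m ∧ l.Coprime m ∧ l ^ 2 + m ^ 2 = n := by
  simp only [primitiveReps, mem_filter, mem_product, mem_Icc, Nat.coprime_iff_gcd_eq_one]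
  constructor
  · rintro ⟨⟨⟨hl, _⟩, hm, _⟩, hn, hlm⟩
    exact ⟨hl, hm, hlm, hn⟩
  · rintro ⟨hl, hm, hlm, rfl⟩
    exact ⟨⟨⟨hl, by nlinarith⟩, hm, by nlinarith⟩, rfl, hlm⟩

/-- The generalised Gaussian sequence `a_n` attached to the coefficients `γ`. -/
def gaussianCoeff {M : Type*} [AddCommMonoid M] (γ : ℕ → M) (n : ℕ) : M :=
  ∑ lm ∈ primitiveReps n, γ lm.1

lemma sum_mul_gaussianCoeff {R : Type*} [CommSemiring R] (u v : ℝ) (h c : ℕ → R) :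
    ∑ n ∈ Icc 1 ⌊v⌋₊ with u < (n : ℕ), h n * gaussianCoeff c n =
      ∑ l ∈ Icc 1 ⌊√v⌋₊, c l * ∑ m ∈ annulusSlice u v l, h (l ^ 2 + m ^ 2) := by
  simp only [gaussianCoeff, mul_sum, sum_sigma']
  refine sum_nbij' (fun q ↦ ⟨q.2.1, q.2.2⟩) (fun q ↦ ⟨q.1 ^ 2 + q.2 ^ 2, (q.1, q.2)⟩)
    ?_ ?_ ?_ (fun _ _ ↦ rfl) ?_
  · rintro ⟨n, l, m⟩ hq
    simp only [mem_sigma, mem_filter, mem_Icc, mem_primitiveReps] at hq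
    obtain ⟨⟨⟨hn, hnv⟩, hun⟩, hl, hm, hlm, rfl⟩ := hq
    have hv : ((l ^ 2 + m ^ 2 : ℕ) : ℝ) ≤ v := (Nat.le_floor_iff' (by omega)).1 hnv
    have hlv : (l : ℝ) ^ 2 ≤ v := by
      push_cast at hv
      linarith [sq_nonneg (m : ℝ)]
    simp only [mem_sigma, mem_Icc, mem_annulusSlice]
    exact ⟨⟨hl, Nat.le_floor (Real.le_sqrt_of_sq_le hlv)⟩, hm, hlm, hun, hv⟩
  · rintro ⟨l, m⟩ hq
    simp only [mem_sigma, mem_Icc, mem_annulusSlice] at hq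
    obtain ⟨⟨hl, _⟩, hm, hlm, hu, hv⟩ := hq
    simp only [mem_sigma, mem_filter, mem_Icc, mem_primitiveReps]
    exact ⟨⟨⟨by nlinarith, Nat.le_floor hv⟩, hu⟩, hl, hm, hlm, trivial⟩
  · rintro ⟨n, l, m⟩ hq
    obtain ⟨_, _, _, rfl⟩ := mem_primitiveReps.1 (mem_sigma.1 hq).2
    rfl
  · rintro ⟨n, l, m⟩ hq
    obtain ⟨_, _, _, rfl⟩ := mem_primitiveReps.1 (mem_sigma.1 hq).2
    exact mul_comm _ _

lemma norm_gaussianCoeff_le {E : Type*} [SeminormedAddCommGroup E] (γ : ℕ → E) (n : ℕ) :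
    ‖gaussianCoeff γ n‖ ≤ gaussianCoeff (fun l ↦ ‖γ l‖) n :=
  norm_sum_le _ _

lemma sum_card_divisors_mul_norm_gaussianCoeff_le {E : Type*} [SeminormedAddCommGroup E] {r : ℕ}
    (hr : r ≠ 0) {K δ : ℝ} (hK : 0 < K) (hδK : δ ≤ K ^ (2 * r)) (hKδ : K ^ (2 * r - 1) ≤ δ)
    (hKδ' : (K ^ (2 * r)) ^ 3 ≤ δ ^ 4) {γ : ℕ → E} (hγ : ∀ l, ‖γ l‖ ≤ 1)
    (hsupp : ∀ l, (¬ ∃ k : ℕ, 1 ≤ k ∧ l = k ^ r) → γ l = 0) :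
    ∑ n ∈ Icc 1 ⌊K ^ (2 * r)⌋₊ with K ^ (2 * r) - δ < (n : ℕ),
        #n.divisors * ‖gaussianCoeff γ n‖ ≤
      96 * δ * K / K ^ r * (1 + Real.log (K ^ (2 * r))) ^ 32 := by
  set x := K ^ (2 * r) with hx
  set L := (1 + Real.log x) ^ 32
  have hδ : 0 < δ := (pow_pos hK _).trans_le hKδ
  have hsqrt : √x = K ^ r := by rw [hx, mul_comm, pow_mul, Real.sqrt_sq (by positivity)]
  calc ∑ n ∈ Icc 1 ⌊x⌋₊ with x - δ < (n : ℕ), #n.divisors * ‖gaussianCoeff γ n‖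
      ≤ ∑ n ∈ Icc 1 ⌊x⌋₊ with x - δ < (n : ℕ),
          #n.divisors * gaussianCoeff (fun l ↦ ‖γ l‖) n := by
        gcongr
        exact norm_gaussianCoeff_le γ _
    _ = ∑ l ∈ Icc 1 ⌊K ^ r⌋₊, ‖γ l‖ * ∑ m ∈ annulusSlice (x - δ) x l,
          (#(l ^ 2 + m ^ 2).divisors : ℝ) := by
        rw [sum_mul_gaussianCoeff _ _ (fun n ↦ (#n.divisors : ℝ)), hsqrt]
    _ ≤ ∑ l ∈ Icc 1 ⌊K ^ r⌋₊, ‖γ l‖ * (48 * δ * L * (1 / √(x - (l : ℝ) ^ 2 + δ))) := by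
        gcongr with l hl
        have hlK : (l : ℝ) ≤ √x :=
          hsqrt ▸ (Nat.le_floor_iff (by positivity)).1 (mem_Icc.1 hl).2
        exact sum_annulusSlice_card_divisors_le
          ((Real.le_sqrt l.cast_nonneg (by positivity)).1 hlK) hδ hδK hKδ'
    _ ≤ ∑ k ∈ Icc 1 ⌊K⌋₊, 48 * δ * L * (1 / √(x - ((k ^ r : ℕ) : ℝ) ^ 2 + δ)) :=
        sum_norm_mul_le_sum_pow hr hK.le hγ hsupp fun l ↦ by positivity
    _ = 48 * δ * L * ∑ k ∈ Icc 1 ⌊K⌋₊, 1 / √(K ^ (2 * r) - (k : ℝ) ^ (2 * r) + δ) := by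
        rw [mul_sum]
        simp only [hx, Nat.cast_pow, ← pow_mul, mul_comm]
    _ ≤ 48 * δ * L * (2 * K / √(K ^ (2 * r))) := by
        gcongr
        exact sum_one_div_sqrt_pow_sub_pow_le (mul_ne_zero two_ne_zero hr) hK hKδ
    _ = 96 * δ * K / K ^ r * L := by
        rw [← hx, hsqrt]
        ring

end GaussianCoeff

section Smoothing

lemma sum_norm_sub_smoothed_le {R : Type*} [SeminormedRing R] {a f : ℕ → R} {u : ℝ}
    (hf : ∀ n, ‖1 - f n‖ ≤ 1) (hf_one : ∀ n : ℕ, (n : ℝ) ≤ u → f n = 1) (D : Finset ℕ) (X : ℕ) :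
    ∑ d ∈ D, ‖(∑ n ∈ Icc 1 X with d ∣ n, a n) - ∑ n ∈ Icc 1 X with d ∣ n, a n * f n‖ ≤
      ∑ n ∈ Icc 1 X with u < (n : ℕ), #n.divisors * ‖a n‖ := by
  have hnorm (n : ℕ) : ‖a n * (1 - f n)‖ ≤ if u < n then ‖a n‖ else 0 := by
    split_ifs with hn
    · exact (norm_mul_le _ _).trans (mul_le_of_le_one_right (norm_nonneg _) (hf n))
    · rw [hf_one n (not_lt.1 hn), sub_self, mul_zero, norm_zero]
  calc ∑ d ∈ D, ‖(∑ n ∈ Icc 1 X with d ∣ n, a n) - ∑ n ∈ Icc 1 X with d ∣ n, a n * f n‖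
      = ∑ d ∈ D, ‖∑ n ∈ Icc 1 X with d ∣ n, a n * (1 - f n)‖ := by
        simp only [← sum_sub_distrib, mul_sub, mul_one]
    _ ≤ ∑ n ∈ Icc 1 X, #n.divisors * ‖a n * (1 - f n)‖ :=
        sum_norm_sum_dvd_le D _ (by simp) _
    _ ≤ ∑ n ∈ Icc 1 X, #n.divisors * if u < n then ‖a n‖ else 0 := by
        gcongr with n
        exact hnorm n
    _ = ∑ n ∈ Icc 1 X with u < (n : ℕ), #n.divisors * ‖a n‖ := by
        simp only [sum_filter, mul_ite, mul_zero]

lemma one_le_pow_mul_of_rpow_le {x κ : ℝ} (hx : 0 < x) (hκ1 : κ ≤ 1) {i n : ℕ} (hn : n ≠ 0)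
    (hin : i ≤ n) (hκ : x ^ (-(1 : ℝ) / n) ≤ κ) : 1 ≤ κ ^ i * x := by
  have hκ0 : 0 ≤ κ := (Real.rpow_nonneg hx.le _).trans hκ
  calc (1 : ℝ) = (x ^ (-(1 : ℝ) / n)) ^ n * x := by
        rw [← Real.rpow_mul_natCast hx.le, div_mul_cancel₀ _ (by exact_mod_cast hn),
          Real.rpow_neg_one, inv_mul_cancel₀ hx.ne']
    _ ≤ κ ^ n * x := by gcongr
    _ ≤ κ ^ i * x := mul_le_mul_of_nonneg_right (pow_le_pow_of_le_one hκ0 hκ1 hin) hx.le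

lemma norm_one_sub_ofReal_le_one {t : ℝ} (h0 : 0 ≤ t) (h1 : t ≤ 1) : ‖1 - (t : ℂ)‖ ≤ 1 := by
  rw [← Complex.ofReal_one, ← Complex.ofReal_sub, Complex.norm_real, Real.norm_eq_abs, abs_le]
  constructor <;> linarith

lemma one_add_log_pow_le {x : ℝ} (hx : 2 ≤ x) (i j : ℕ) :
    (1 + Real.log x) ^ i ≤ 3 ^ i * 2 ^ j * Real.log x ^ (i + j) := by
  have hlog : 1 ≤ 2 * Real.log x := by
    linarith [Real.log_two_gt_d9, Real.log_le_log two_pos hx]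
  have hlog0 : 0 ≤ Real.log x := by linarith
  calc (1 + Real.log x) ^ i ≤ (3 * Real.log x) ^ i := by gcongr; linarith
    _ ≤ (3 * Real.log x) ^ i * (2 * Real.log x) ^ j :=
        le_mul_of_one_le_right (by positivity) (one_le_pow₀ hlog)
    _ = 3 ^ i * 2 ^ j * Real.log x ^ (i + j) := by ring

lemma sum_norm_sub_smoothed_gaussianCoeff_le {R : Type*} [SeminormedRing R] {r : ℕ} (hr : r ≠ 0)
    {x κ : ℝ} (hκ0 : 0 ≤ κ) (hκ1 : κ ≤ 1) (hκ4 : 1 ≤ κ ^ 4 * x) (hκr : 1 ≤ κ ^ (2 * r) * x)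
    {γ : ℕ → R} (hγ : ∀ l, ‖γ l‖ ≤ 1)
    (hsupp : ∀ l, (¬ ∃ k : ℕ, 1 ≤ k ∧ l = k ^ r) → γ l = 0) {f : ℕ → R}
    (hf : ∀ n, ‖1 - f n‖ ≤ 1) (hf_one : ∀ n : ℕ, (n : ℝ) ≤ (1 - κ) * x → f n = 1)
    (D : Finset ℕ) :
    ∑ d ∈ D, ‖(∑ n ∈ Icc 1 ⌊x⌋₊ with d ∣ n, gaussianCoeff γ n) -
        ∑ n ∈ Icc 1 ⌊x⌋₊ with d ∣ n, gaussianCoeff γ n * f n‖ ≤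
      96 * κ * x ^ (((r : ℝ) + 1) / (2 * r)) * (1 + Real.log x) ^ 32 := by
  have hx : 0 < x := pos_of_mul_pos_right (one_pos.trans_le hκ4) (by positivity)
  have h2r : 2 * r ≠ 0 := mul_ne_zero two_ne_zero hr
  obtain ⟨K, hK, rfl⟩ : ∃ K : ℝ, 0 < K ∧ K ^ (2 * r) = x :=
    ⟨x ^ ((2 * r : ℕ) : ℝ)⁻¹, by positivity, Real.rpow_inv_natCast_pow hx.le h2r⟩
  have hκK : 1 ≤ κ * K := by
    rwa [← mul_pow, one_le_pow_iff_of_nonneg (by positivity) h2r] at hκr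
  have hexp : (K ^ (2 * r)) ^ (((r : ℝ) + 1) / (2 * r)) = K ^ (r + 1) := by
    rw [← Real.rpow_natCast_mul hK.le, ← Real.rpow_natCast]
    push_cast
    congr 1
    field_simp
  have hshort : K ^ (2 * r - 1) ≤ κ * K ^ (2 * r) := by
    rw [← pow_sub_one_mul h2r K]
    nlinarith [pow_pos hK (2 * r - 1)]
  have hlong : (K ^ (2 * r)) ^ 3 ≤ (κ * K ^ (2 * r)) ^ 4 := by
    nlinarith [pow_pos hx 3]
  calc _ ≤ ∑ n ∈ Icc 1 ⌊K ^ (2 * r)⌋₊ with K ^ (2 * r) - κ * K ^ (2 * r) < (n : ℕ),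
        #n.divisors * ‖gaussianCoeff γ n‖ :=
        sum_norm_sub_smoothed_le hf (fun n hn ↦ hf_one n (by linarith)) D _
    _ ≤ 96 * (κ * K ^ (2 * r)) * K / K ^ r * (1 + Real.log (K ^ (2 * r))) ^ 32 :=
        sum_card_divisors_mul_norm_gaussianCoeff_le hr hK (mul_le_of_le_one_left hx.le hκ1) hshort
          hlong hγ hsupp
    _ = 96 * κ * (K ^ (2 * r)) ^ (((r : ℝ) + 1) / (2 * r)) *
        (1 + Real.log (K ^ (2 * r))) ^ 32 := by
        rw [hexp]
        field_simp
        ring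

end Smoothing

end GaussianSmoothing

open GaussianSmoothing

theorem gaussian_smoothing_error_general {R : Type*} [SeminormedRing R] {r : ℕ} (hr : r ≠ 0)
    {x κ : ℝ} (hx : 2 ≤ x) (hκ0 : 0 ≤ κ) (hκ1 : κ ≤ 1) (hκ4 : 1 ≤ κ ^ 4 * x)
    (hκr : 1 ≤ κ ^ (2 * r) * x) {γ : ℕ → R} (hγ : ∀ l, ‖γ l‖ ≤ 1)
    (hsupp : ∀ l, (¬ ∃ k : ℕ, 1 ≤ k ∧ l = k ^ r) → γ l = 0) {f : ℕ → R}
    (hf : ∀ n, ‖1 - f n‖ ≤ 1) (hf_one : ∀ n : ℕ, (n : ℝ) ≤ (1 - κ) * x → f n = 1)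
    (D : Finset ℕ) (j : ℕ) :
    ∑ d ∈ D, ‖(∑ n ∈ Icc 1 ⌊x⌋₊ with d ∣ n, gaussianCoeff γ n) -
        ∑ n ∈ Icc 1 ⌊x⌋₊ with d ∣ n, gaussianCoeff γ n * f n‖ ≤
      96 * (3 ^ 32 * 2 ^ j) * κ * x ^ (((r : ℝ) + 1) / (2 * r)) * Real.log x ^ (32 + j) := by
  calc _ ≤ 96 * κ * x ^ (((r : ℝ) + 1) / (2 * r)) * (1 + Real.log x) ^ 32 :=
        sum_norm_sub_smoothed_gaussianCoeff_le hr hκ0 hκ1 hκ4 hκr hγ hsupp hf hf_one D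
    _ ≤ 96 * κ * x ^ (((r : ℝ) + 1) / (2 * r)) * (3 ^ 32 * 2 ^ j * Real.log x ^ (32 + j)) := by
        gcongr
        exact one_add_log_pow_le hx 32 j
    _ = _ := by ring

theorem gaussian_smoothing_error (r : ℕ) (hr : 1 ≤ r) :
    ∃ C : ℝ, 0 < C ∧
    ∀ x : ℝ, 2 ≤ x →
    ∀ κ : ℝ, x ^ (-(1 : ℝ) / (4 * r)) ≤ κ → κ ≤ 1 →
    ∀ D : ℝ, Real.sqrt x ≤ D → D ≤ x ^ (((r : ℝ) + 1) / (2 * r)) →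
    ∀ γ : ℕ → ℂ, (∀ l, ‖γ l‖ ≤ 1) →
    (∀ l, (¬ ∃ k : ℕ, 1 ≤ k ∧ l = k ^ r) → γ l = 0) →
    ∀ f : ℝ → ℝ, ContDiff ℝ (⊤ : ℕ∞) f →
    (∀ t : ℝ, 0 ≤ f t ∧ f t ≤ 1) →
    (∀ t : ℝ, 0 ≤ t → t ≤ (1 - κ) * x → f t = 1) →
    (∀ t : ℝ, x ≤ t → f t = 0) →
    ∀ a : ℕ → ℂ,
    (∀ n : ℕ, a n = ∑ lm ∈ ((Finset.Icc 1 n ×ˢ Finset.Icc 1 n).filter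
        (fun lm => lm.1 ^ 2 + lm.2 ^ 2 = n ∧ Nat.gcd lm.1 lm.2 = 1)), γ lm.1) →
    ∑ d ∈ Finset.Icc 1 ⌊D⌋₊,
      ‖(∑ n ∈ (Finset.Icc 1 ⌊x⌋₊).filter (fun n => d ∣ n), a n) -
        (∑ n ∈ (Finset.Icc 1 ⌊x⌋₊).filter (fun n => d ∣ n), a n * (f n : ℂ))‖
      ≤ C * κ * x ^ (((r : ℝ) + 1) / (2 * r)) * Real.log x ^ (128 : ℕ) := by
  refine ⟨96 * (3 ^ 32 * 2 ^ 96), by positivity, ?_⟩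
  intro x hx κ hκ hκ1 D _ _ γ hγ hsupp f _ hf hf_one _ a ha
  obtain rfl : a = gaussianCoeff γ := funext ha
  have hx0 : 0 < x := by linarith
  have hκ_pow {i : ℕ} (hi : i ≤ 4 * r) : 1 ≤ κ ^ i * x :=
    one_le_pow_mul_of_rpow_le hx0 hκ1 (by omega) hi (by exact_mod_cast hκ)
  exact gaussian_smoothing_error_general (by omega) hx ((Real.rpow_nonneg hx0.le _).trans hκ) hκ1
    (hκ_pow (by omega)) (hκ_pow (by omega)) hγ hsupp
    (fun n ↦ norm_one_sub_ofReal_le_one (hf n).1 (hf n).2)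
    (fun n hn ↦ by rw [hf_one n n.cast_nonneg hn, Complex.ofReal_one]) _ 96
end
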